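/- (Kernel form of the integral star-triangle relation) Let p, q be complex numbers with 0 < |p| < 1, 0 < |q| < 1 and fix a square root √(pq). Let s, t, y, w, z be nonzero complex numbers satisfying |sw| < 1, |sw^{−1}| < 1, |tz| < 1, |tz^{−1}| < 1, |√(pq)(st)^{−1}y| < 1, |√(pq)(st)^{−1}y^{−1}| < 1. Then ((p;p)_∞(q;q)_∞/(4πi)) ∮_{|x|=1} [Γ(sw x;p,q)Γ(sw x^{−1};p,q)Γ(sw^{−1}x;p,q)Γ(sw^{−1}x^{−1};p,q) · Γ(√(pq)(st)^{−1}y^{±1}x^{±1};p,q) · Γ(tx z;p,q)Γ(tx z^{−1};p,q)Γ(tx^{−1}z;p,q)Γ(tx^{−1}z^{−1};p,q)] / [Γ(x²;p,q)Γ(x^{−2};p,q)] dx/x = [Γ(s²;p,q)Γ(t²;p,q)/Γ(s²t²;p,q)] · D(t;y,w) · Γ(st w^{±1} z^{±1};p,q) · D(s;y,z), where Γ(a x^{±1} u^{±1};p,q) denotes the product of the four elliptic gamma functions with all sign choices. -/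

import Mathlib

open Complex Real Filter Topology

/-- The infinite q-Pochhammer symbol (z;q)_inf. -/
noncomputable def qpoch (z q : ℂ) : ℂ := ∏' j : ℕ, (1 - z * q ^ j)

/-- The elliptic gamma function Γ(z;p,q). -/
noncomputable def egamma (z p q : ℂ) : ℂ :=
  ∏' jk : ℕ × ℕ, (1 - z⁻¹ * p ^ (jk.1 + 1) * q ^ (jk.2 + 1)) / (1 - z * p ^ jk.1 * q ^ jk.2)

/-- The short Jacobi theta function θ(z;p) (base first argument). -/
noncomputable def theta (p z : ℂ) : ℂ := qpoch z p * qpoch (p * z⁻¹) p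

/-- D(s;y,w) built from four elliptic gamma functions; `r` is a fixed square root of `p*q`. -/
noncomputable def Dfun (p q r s y w : ℂ) : ℂ :=
  egamma (r * s⁻¹ * y * w) p q * egamma (r * s⁻¹ * y * w⁻¹) p q *
    egamma (r * s⁻¹ * y⁻¹ * w) p q * egamma (r * s⁻¹ * y⁻¹ * w⁻¹) p q

/-- Γ(a u^{±1} v^{±1};p,q): the product of the four elliptic gamma functions. -/
noncomputable def gamma4 (p q a u v : ℂ) : ℂ :=
  egamma (a * u * v) p q * egamma (a * u * v⁻¹) p q *
    egamma (a * u⁻¹ * v) p q * egamma (a * u⁻¹ * v⁻¹) p q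

/-- The constant κ = (p;p)_∞ (q;q)_∞ / (4πi). -/
noncomputable def kappa (p q : ℂ) : ℂ := qpoch p p * qpoch q q / (4 * (Real.pi : ℂ) * Complex.I)

variable {p q : ℂ}


section basic

lemma prodsum_differentiable {ι : Type*} (c : ι → ℂ) (hc : Summable fun i => ‖c i‖) :
    Differentiable ℂ (fun z : ℂ => ∏' i, (1 - z * c i)) := by
  intro z
  have hU : IsOpen (Metric.ball (0:ℂ) (‖z‖ + 1)) := Metric.isOpen_ball
  have hz : z ∈ Metric.ball (0:ℂ) (‖z‖ + 1) := by simp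
  have key := Summable.hasProdLocallyUniformlyOn_one_add (f := fun i x => - (x * c i)) hU
    (hc.mul_left (‖z‖ + 1)) (Eventually.of_forall (fun i x hx => by
      rw [norm_neg, norm_mul]
      have : ‖x‖ < ‖z‖ + 1 := by simpa using hx
      gcongr)) (fun i => by fun_prop)
  have := key.differentiableOn (.of_forall fun _ ↦ by
    simpa [Finset.prod_fn] using DifferentiableOn.finsetProd (fun _ _ ↦ by fun_prop)) hU
  have h2 := this.differentiableAt (hU.mem_nhds hz)
  simpa [sub_eq_add_neg] using h2

lemma prodsum_multipliable {ι : Type*} (c : ι → ℂ) (hc : Summable fun i => ‖c i‖) (z : ℂ) :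
    Multipliable (fun i => 1 - z * c i) := by
  have := multipliable_one_add_of_summable (f := fun i => -(z * c i))
    (by simpa using hc.mul_left ‖z‖)
  simpa [sub_eq_add_neg] using this

lemma prodsum_ne_zero {ι : Type*} (c : ι → ℂ) (hc : Summable fun i => ‖c i‖) (z : ℂ)
    (h : ∀ i, 1 - z * c i ≠ 0) : ∏' i, (1 - z * c i) ≠ 0 := by
  have := tprod_one_add_ne_zero_of_summable (f := fun i => -(z * c i))
    (by simpa [sub_eq_add_neg] using h) (by simpa using hc.mul_left ‖z‖)
  simpa [sub_eq_add_neg] using this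

lemma summ_pow {q : ℂ} (hq : ‖q‖ < 1) : Summable (fun j : ℕ => ‖q ^ j‖) := by
  simpa using summable_geometric_of_lt_one (norm_nonneg _) hq

lemma qpoch_differentiable {q : ℂ} (hq : ‖q‖ < 1) : Differentiable ℂ (fun z => qpoch z q) :=
  prodsum_differentiable _ (summ_pow hq)

lemma qpoch_succ {q : ℂ} (hq : ‖q‖ < 1) (z : ℂ) :
    qpoch z q = (1 - z) * qpoch (q * z) q := by
  unfold qpoch
  rw [tprod_eq_zero_mul']
  · simp only [pow_zero, mul_one]
    congr 2; ext j; rw [pow_succ]; ring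
  · have := (prodsum_multipliable _ (summ_pow hq) (q * z))
    refine this.congr ?_
    intro j; rw [pow_succ]; ring

lemma one_sub_ne_of_norm_lt {u : ℂ} (h : ‖u‖ < 1) : 1 - u ≠ 0 := by
  intro h0
  have : u = 1 := by linear_combination -h0
  rw [this] at h; simp at h

lemma qpoch_ne_zero {q : ℂ} (hq : ‖q‖ < 1) {z : ℂ} (hz : ‖z‖ < 1) : qpoch z q ≠ 0 := by
  apply prodsum_ne_zero _ (summ_pow hq)
  intro i
  apply one_sub_ne_of_norm_lt
  rw [norm_mul, norm_pow]
  have : ‖q‖ ^ i ≤ 1 := pow_le_one₀ (norm_nonneg _) hq.le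
  calc ‖z‖ * ‖q‖ ^ i ≤ ‖z‖ * 1 := by gcongr
    _ < 1 := by linarith

/-- double product -/
noncomputable def EE (p q z : ℂ) : ℂ := ∏' jk : ℕ × ℕ, (1 - z * (p ^ jk.1 * q ^ jk.2))

lemma summ_pow2 {p q : ℂ} (hp : ‖p‖ < 1) (hq : ‖q‖ < 1) :
    Summable (fun jk : ℕ × ℕ => ‖p ^ jk.1 * q ^ jk.2‖) := by
  have := Summable.mul_of_nonneg (summ_pow hp) (summ_pow hq) (fun _ => norm_nonneg _)
    (fun _ => norm_nonneg _)
  simpa using this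

lemma EE_differentiable {p q : ℂ} (hp : ‖p‖ < 1) (hq : ‖q‖ < 1) :
    Differentiable ℂ (EE p q) :=
  prodsum_differentiable _ (summ_pow2 hp hq)

lemma EE_ne_zero {p q : ℂ} (hp : ‖p‖ < 1) (hq : ‖q‖ < 1) {z : ℂ} (hz : ‖z‖ < 1) :
    EE p q z ≠ 0 := by
  apply prodsum_ne_zero _ (summ_pow2 hp hq)
  intro i
  apply one_sub_ne_of_norm_lt
  rw [norm_mul, norm_mul, norm_pow, norm_pow]
  have h1 : ‖p‖ ^ i.1 ≤ 1 := pow_le_one₀ (norm_nonneg _) hp.le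
  have h2 : ‖q‖ ^ i.2 ≤ 1 := pow_le_one₀ (norm_nonneg _) hq.le
  calc ‖z‖ * (‖p‖ ^ i.1 * ‖q‖ ^ i.2) ≤ ‖z‖ * (1 * 1) := by gcongr
    _ < 1 := by linarith

lemma EE_symm (p q z : ℂ) : EE p q z = EE q p z := by
  unfold EE
  rw [← (Equiv.prodComm ℕ ℕ).tprod_eq]
  congr 1; ext jk; simp [mul_comm]

lemma EE_hasProd {p q : ℂ} (hp : ‖p‖ < 1) (hq : ‖q‖ < 1) (z : ℂ) :
    HasProd (fun j : ℕ => qpoch (z * p ^ j) q) (EE p q z) := by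
  have h := (prodsum_multipliable _ (summ_pow2 hp hq) z).hasProd
  refine h.prod_fiberwise (fun j => ?_)
  have := (prodsum_multipliable _ (summ_pow hq) (z * p ^ j)).hasProd
  simpa [qpoch, mul_assoc] using this

lemma EE_p {p q : ℂ} (hp : ‖p‖ < 1) (hq : ‖q‖ < 1) (z : ℂ) :
    EE p q z = qpoch z q * EE p q (p * z) := by
  have h1 := EE_hasProd hp hq z
  have h2 := EE_hasProd hp hq (p * z)
  rw [← h1.tprod_eq, ← h2.tprod_eq, tprod_eq_zero_mul']
  · simp only [pow_zero, mul_one]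
    congr 2; ext j; congr 1; rw [pow_succ]; ring
  · refine h2.multipliable.congr ?_
    intro j; congr 1; rw [pow_succ]; ring

lemma EE_q {p q : ℂ} (hp : ‖p‖ < 1) (hq : ‖q‖ < 1) (z : ℂ) :
    EE p q z = qpoch z p * EE p q (q * z) := by
  rw [EE_symm, EE_p hq hp, EE_symm q p]

lemma egamma_eq {p q : ℂ} (hp : ‖p‖ < 1) (hq : ‖q‖ < 1) (z : ℂ) :
    egamma z p q = EE p q (p * q * z⁻¹) / EE p q z := by
  have hN := (prodsum_multipliable _ (summ_pow2 hp hq) (p * q * z⁻¹)).hasProd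
  have hD := (prodsum_multipliable _ (summ_pow2 hp hq) z).hasProd
  by_cases h : ∀ jk : ℕ × ℕ, 1 - z * (p ^ jk.1 * q ^ jk.2) ≠ 0
  · have h0 := prodsum_ne_zero _ (summ_pow2 hp hq) z h
    unfold egamma
    apply HasProd.tprod_eq
    have := Tendsto.div hN hD h0
    refine Tendsto.congr ?_ this
    intro s
    simp only [Pi.div_apply, ← Finset.prod_div_distrib]
    apply Finset.prod_congr rfl
    intro jk _
    congr 1
    · rw [pow_succ, pow_succ]; ring
    · ring
  · push Not at h
    obtain ⟨jk, hjk⟩ := h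
    have h1 : EE p q z = 0 := tprod_of_exists_eq_zero ⟨jk, hjk⟩
    rw [h1, div_zero]
    apply tprod_of_exists_eq_zero
    refine ⟨jk, ?_⟩
    rw [show 1 - z * p ^ jk.1 * q ^ jk.2 = 0 by rw [← hjk]; ring, div_zero]

lemma egamma_differentiableAt {p q : ℂ} (hp : ‖p‖ < 1) (hq : ‖q‖ < 1) {z : ℂ} (hz0 : z ≠ 0)
    (hz : ‖z‖ < 1) : DifferentiableAt ℂ (fun z => egamma z p q) z := by
  have h : (fun z => egamma z p q) = fun z => EE p q (p * q * z⁻¹) / EE p q z := by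
    ext z; exact egamma_eq hp hq z
  rw [h]
  refine DifferentiableAt.div ?_ (EE_differentiable hp hq z) (EE_ne_zero hp hq hz)
  exact (EE_differentiable hp hq _).comp z (by fun_prop (disch := assumption))

lemma egamma_ne_zero {p q : ℂ} (hp : ‖p‖ < 1) (hq : ‖q‖ < 1) {z : ℂ}
    (hz : ‖z‖ < 1) (hz2 : ‖p * q‖ < ‖z‖) : egamma z p q ≠ 0 := by
  rw [egamma_eq hp hq]
  have h0 : 0 < ‖z‖ := lt_of_le_of_lt (norm_nonneg _) hz2
  refine div_ne_zero (EE_ne_zero hp hq ?_) (EE_ne_zero hp hq hz)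
  rw [norm_mul, norm_inv, ← div_eq_mul_inv, div_lt_one h0]
  exact hz2

lemma egamma_refl {p q : ℂ} (hp : ‖p‖ < 1) (hq : ‖q‖ < 1) {z w : ℂ}
    (hz : ‖z‖ < 1) (hw : ‖w‖ < 1) (hz0 : z ≠ 0) (hw0 : w ≠ 0) (h : z * w = p * q) :
    egamma z p q * egamma w p q = 1 := by
  rw [egamma_eq hp hq, egamma_eq hp hq, ← h]
  have h1 : z * w * z⁻¹ = w := by field_simp
  have h2 : z * w * w⁻¹ = z := by field_simp
  rw [h1, h2]
  have := EE_ne_zero hp hq hz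
  have := EE_ne_zero hp hq hw
  field_simp

lemma egamma_shift {p q : ℂ} (hp : ‖p‖ < 1) (hq : ‖q‖ < 1) (hq0 : q ≠ 0) {z : ℂ} (hz : ‖z‖ < 1) :
    egamma (q * z) p q = theta p z * egamma z p q := by
  rw [egamma_eq hp hq, egamma_eq hp hq, theta]
  have h1 : p * q * (q * z)⁻¹ = p * z⁻¹ := by
    rw [mul_inv]; field_simp
  have h2 := EE_q hp hq z
  have h3 := EE_q hp hq (p * z⁻¹)
  have h0 := EE_ne_zero hp hq hz
  rw [h1, show p * q * z⁻¹ = q * (p * z⁻¹) by ring, h3, h2]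
  rw [h2] at h0
  have h4 := left_ne_zero_of_mul h0
  have h5 := right_ne_zero_of_mul h0
  field_simp

/-- theta facts -/
lemma theta_differentiableAt {p : ℂ} (hp : ‖p‖ < 1) {z : ℂ} (hz : z ≠ 0) :
    DifferentiableAt ℂ (theta p) z := by
  unfold theta
  refine DifferentiableAt.mul (qpoch_differentiable hp z) ?_
  exact (qpoch_differentiable hp _).comp z (f := fun z => p * z⁻¹)
    (by fun_prop (disch := assumption))

lemma theta_p_mul {p : ℂ} (hp : ‖p‖ < 1) (hp0 : p ≠ 0) {z : ℂ} (hz : z ≠ 0) :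
    theta p (p * z) = - z⁻¹ * theta p z := by
  unfold theta
  rw [show p * (p * z)⁻¹ = z⁻¹ by field_simp, qpoch_succ hp z, qpoch_succ hp z⁻¹]
  field_simp
  ring

lemma theta_inv {p : ℂ} (hp : ‖p‖ < 1) {z : ℂ} (hz : z ≠ 0) :
    theta p z⁻¹ = - z⁻¹ * theta p z := by
  unfold theta
  rw [inv_inv, qpoch_succ hp z, qpoch_succ hp z⁻¹]
  field_simp
  ring

lemma theta_p_div {p : ℂ} (hp0 : p ≠ 0) (z : ℂ) :
    theta p (p * z⁻¹) = theta p z := by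
  unfold theta
  rw [mul_inv, inv_inv, mul_inv_cancel_left₀ hp0, mul_comm]

lemma theta_ne_zero {p : ℂ} (hp : ‖p‖ < 1) {z : ℂ} (hz : ‖z‖ < 1) (hz2 : ‖p‖ < ‖z‖) :
    theta p z ≠ 0 := by
  have h0 : 0 < ‖z‖ := lt_of_le_of_lt (norm_nonneg _) hz2
  refine mul_ne_zero (qpoch_ne_zero hp hz) (qpoch_ne_zero hp ?_)
  rw [norm_mul, norm_inv, ← div_eq_mul_inv, div_lt_one h0]
  exact hz2

lemma theta_one {p : ℂ} (hp : ‖p‖ < 1) : theta p 1 = 0 := by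
  unfold theta; rw [qpoch_succ hp]; simp

end basic

section liouville

lemma annulus_preconnected {a b : ℝ} (ha : 0 < a) (hb : 0 < b) :
    IsPreconnected {x : ℂ | a < ‖x‖ ∧ ‖x‖ < b} := by
  have h : {x : ℂ | a < ‖x‖ ∧ ‖x‖ < b} = Set.image Complex.exp {l : ℂ | Real.log a < l.re ∧ l.re < Real.log b} := by
    ext x
    simp only [Set.mem_setOf_eq, Set.mem_image]
    constructor
    · rintro ⟨h1, h2⟩
      have hx : 0 < ‖x‖ := ha.trans h1
      refine ⟨Complex.log x, ⟨?_, ?_⟩, Complex.exp_log (norm_pos_iff.1 hx)⟩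
      · rw [Complex.log_re]; exact Real.log_lt_log ha h1
      · rw [Complex.log_re]; exact Real.log_lt_log hx h2
    · rintro ⟨l, ⟨h1, h2⟩, rfl⟩
      rw [Complex.norm_exp]
      constructor
      · rwa [← Real.log_lt_iff_lt_exp ha]
      · rwa [← Real.lt_log_iff_exp_lt hb]
  rw [h]
  refine IsPreconnected.image ?_ _ Complex.continuous_exp.continuousOn
  apply Convex.isPreconnected
  have h2 : {l : ℂ | Real.log a < l.re ∧ l.re < Real.log b}
      = {l : ℂ | Real.log a < l.re} ∩ {l : ℂ | l.re < Real.log b} := rfl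
  rw [h2]
  exact (convex_halfSpace_re_gt _).inter (convex_halfSpace_re_lt _)

lemma annulus_isOpen (a b : ℝ) : IsOpen {x : ℂ | a < ‖x‖ ∧ ‖x‖ < b} :=
  (isOpen_lt continuous_const continuous_norm).inter (isOpen_lt continuous_norm continuous_const)

lemma annulus_const {q : ℂ} (hq0 : 0 < ‖q‖) (hq1 : ‖q‖ < 1) {a b : ℝ} (ha : 0 < a)
    (hab : a < ‖q‖ * b) (f : ℂ → ℂ)
    (hf : DifferentiableOn ℂ f {x : ℂ | a < ‖x‖ ∧ ‖x‖ < b})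
    (hper : ∀ x : ℂ, a < ‖q * x‖ → ‖x‖ < b → f (q * x) = f x)
    {x y : ℂ} (hx : a < ‖x‖ ∧ ‖x‖ < b) (hy : a < ‖y‖ ∧ ‖y‖ < b) : f x = f y := by
  obtain ⟨R, hR1, hR2⟩ : ∃ R, a / ‖q‖ < R ∧ R < b := exists_between (by
    rw [div_lt_iff₀ hq0]; linarith [mul_comm b ‖q‖])
  have hR0 : 0 < R := lt_trans (by positivity) hR1
  have hqR : a < ‖q‖ * R := by rw [div_lt_iff₀ hq0] at hR1; linarith [mul_comm R ‖q‖]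
  have hb : 0 < b := hR0.trans hR2
  set A := {x : ℂ | a < ‖x‖ ∧ ‖x‖ < b} with hA
  have hAo : IsOpen A := annulus_isOpen a b
  set K := {x : ℂ | ‖q‖ * R ≤ ‖x‖ ∧ ‖x‖ ≤ R} with hK
  have hKA : K ⊆ A := fun x hx => ⟨lt_of_lt_of_le hqR hx.1, lt_of_le_of_lt hx.2 hR2⟩
  have hKc : IsCompact K := by
    refine Metric.isCompact_of_isClosed_isBounded ?_ ?_
    · exact (isClosed_le continuous_const continuous_norm).inter
        (isClosed_le continuous_norm continuous_const)
    · refine (Metric.isBounded_closedBall (x := (0:ℂ)) (r := R)).subset ?_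
      intro x hx
      simpa using hx.2
  have hKn : K.Nonempty := ⟨(R : ℂ), by
    simp only [hK, Set.mem_setOf_eq, Complex.norm_real, Real.norm_eq_abs, abs_of_pos hR0]
    exact ⟨by nlinarith, le_rfl⟩⟩
  obtain ⟨x0, hx0, hmax⟩ := hKc.exists_isMaxOn hKn ((hf.mono hKA).continuousOn.norm)
  have hloc : ∀ᶠ y in 𝓝 x0, ‖f y‖ ≤ ‖f x0‖ := by
    have hU : {x : ℂ | max a (‖q‖ * (‖q‖ * R)) < ‖x‖ ∧ ‖x‖ < min b (R / ‖q‖)} ∈ 𝓝 x0 := by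
      refine (annulus_isOpen _ _).mem_nhds ⟨max_lt ?_ ?_, lt_min ?_ ?_⟩
      · exact (hKA hx0).1
      · refine lt_of_lt_of_le ?_ hx0.1
        have : 0 < ‖q‖ * R := by positivity
        nlinarith
      · exact (hKA hx0).2
      · refine lt_of_le_of_lt hx0.2 ?_
        rw [lt_div_iff₀ hq0]; nlinarith
    filter_upwards [hU] with y hy
    obtain ⟨h1, h2⟩ := hy
    rw [max_lt_iff] at h1
    rw [lt_min_iff, lt_div_iff₀ hq0] at h2
    by_cases c1 : ‖q‖ * R ≤ ‖y‖
    · by_cases c2 : ‖y‖ ≤ R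
      · exact hmax ⟨c1, c2⟩
      · push Not at c2
        have e : ‖q * y‖ = ‖y‖ * ‖q‖ := by rw [norm_mul, mul_comm]
        have hm : q * y ∈ K := ⟨by rw [e]; nlinarith, by rw [e]; exact h2.2.le⟩
        rw [← hper y (hKA hm).1 h2.1]
        exact hmax hm
    · push Not at c1
      have hqne : q ≠ 0 := norm_pos_iff.1 hq0
      have e : ‖q⁻¹ * y‖ = ‖y‖ / ‖q‖ := by rw [norm_mul, norm_inv]; field_simp
      have hm : q⁻¹ * y ∈ K := by
        refine ⟨?_, ?_⟩
        · rw [e, le_div_iff₀ hq0]; nlinarith [h1.2]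
        · rw [e, div_le_iff₀ hq0]; linarith [mul_comm R ‖q‖]
      have e2 : q * (q⁻¹ * y) = y := by field_simp
      have := hper (q⁻¹ * y) (by rw [e2]; exact h1.1) (hKA hm).2
      rw [e2] at this
      rw [this]
      exact hmax hm
  have hd : ∀ᶠ z in 𝓝 x0, DifferentiableAt ℂ f z := by
    filter_upwards [hAo.mem_nhds (hKA hx0)] with z hz
    exact hf.differentiableAt (hAo.mem_nhds hz)
  have hev := Complex.eventually_eq_of_isLocalMax_norm hd hloc
  have han : AnalyticOnNhd ℂ f A := hf.analyticOnNhd hAo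
  have := han.eqOn_of_preconnected_of_eventuallyEq (g := fun _ => f x0) analyticOnNhd_const
    (annulus_preconnected ha hb) (hKA hx0) hev
  rw [this hx, this hy]

lemma punctured_preconnected : IsPreconnected ({0}ᶜ : Set ℂ) :=
  (isConnected_compl_singleton_of_one_lt_rank (by simp) (0:ℂ)).isPreconnected

lemma punctured_mul {f g : ℂ → ℂ} (hf : DifferentiableOn ℂ f {0}ᶜ) (hg : DifferentiableOn ℂ g {0}ᶜ)
    (h : ∀ x ≠ 0, f x * g x = 0) {x1 : ℂ} (hx1 : x1 ≠ 0) (hg1 : g x1 ≠ 0) : ∀ x ≠ 0, f x = 0 := by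
  have ho : IsOpen ({0}ᶜ : Set ℂ) := isOpen_compl_singleton
  rcases AnalyticOnNhd.eq_zero_or_eq_zero_of_mul_eq_zero (hf.analyticOnNhd ho)
    (hg.analyticOnNhd ho) (fun x hx => h x hx) punctured_preconnected with h1 | h1
  · exact fun x hx => h1 x hx
  · exact absurd (h1 x1 hx1) hg1

/-- Liouville on the punctured plane -/
lemma punctured_const {q : ℂ} (hq0 : 0 < ‖q‖) (hq1 : ‖q‖ < 1) (f : ℂ → ℂ)
    (hf : DifferentiableOn ℂ f {0}ᶜ) (hper : ∀ x ≠ 0, f (q * x) = f x) :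
    ∀ x ≠ 0, ∀ y ≠ 0, f x = f y := by
  intro x hx y hy
  have hx' : 0 < ‖x‖ := norm_pos_iff.2 hx
  have hy' : 0 < ‖y‖ := norm_pos_iff.2 hy
  have hm : 0 < min ‖x‖ ‖y‖ := lt_min hx' hy'
  have hM : max ‖x‖ ‖y‖ > 0 := lt_max_of_lt_left hx'
  have hM2 : min ‖x‖ ‖y‖ ≤ max ‖x‖ ‖y‖ := min_le_max
  refine annulus_const hq0 hq1 (a := min ‖x‖ ‖y‖ / 2) (b := max ‖x‖ ‖y‖ / ‖q‖) (by positivity) ?_ f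
    (hf.mono ?_) ?_ ?_ ?_
  · rw [mul_div_cancel₀ _ hq0.ne']; linarith
  · intro z hz
    have : 0 < ‖z‖ := lt_trans (by positivity) hz.1
    exact norm_pos_iff.1 this
  · intro z hz _
    have : 0 < ‖q * z‖ := lt_trans (by positivity) hz
    exact hper z (right_ne_zero_of_mul (norm_pos_iff.1 this))
  · refine ⟨by linarith [min_le_left ‖x‖ ‖y‖], ?_⟩
    rw [lt_div_iff₀ hq0]; nlinarith [le_max_left ‖x‖ ‖y‖]
  · refine ⟨by linarith [min_le_right ‖x‖ ‖y‖], ?_⟩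
    rw [lt_div_iff₀ hq0]; nlinarith [le_max_right ‖x‖ ‖y‖]

lemma punctured_divide {f g : ℂ → ℂ} (hf : DifferentiableOn ℂ f {0}ᶜ)
    (hg : DifferentiableOn ℂ g {0}ᶜ)
    (h : ∀ x ≠ 0, g x = 0 → f x = 0 ∧ deriv g x ≠ 0) :
    ∃ k : ℂ → ℂ, DifferentiableOn ℂ k {0}ᶜ ∧ ∀ x ≠ 0, f x = g x * k x := by
  classical
  have ho : IsOpen ({0}ᶜ : Set ℂ) := isOpen_compl_singleton
  refine ⟨fun x => if g x = 0 then deriv f x / deriv g x else f x / g x, ?_, ?_⟩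
  · intro x hx
    have hx' : x ≠ 0 := hx
    have hfx := hf.differentiableAt (ho.mem_nhds hx)
    have hgx := hg.differentiableAt (ho.mem_nhds hx)
    by_cases c : g x = 0
    · obtain ⟨c1, c2⟩ := h x hx' c
      have hF : DifferentiableAt ℂ (dslope f x) x :=
        ((Complex.differentiableOn_dslope (ho.mem_nhds hx)).2 hf).differentiableAt (ho.mem_nhds hx)
      have hG : DifferentiableAt ℂ (dslope g x) x :=
        ((Complex.differentiableOn_dslope (ho.mem_nhds hx)).2 hg).differentiableAt (ho.mem_nhds hx)
      have hG0 : dslope g x x ≠ 0 := by rwa [dslope_same]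
      have hne : ∀ᶠ y in 𝓝 x, dslope g x y ≠ 0 := hG.continuousAt.eventually_ne hG0
      refine (DifferentiableAt.congr_of_eventuallyEq (hF.div hG hG0) ?_).differentiableWithinAt
      filter_upwards [hne] with y hy
      by_cases hyx : y = x
      · subst hyx; simp [c, dslope_same]
      · rw [dslope_of_ne _ hyx, slope_def_field, c, sub_zero] at hy
        have hyx' : y - x ≠ 0 := sub_ne_zero.2 hyx
        have hgy : g y ≠ 0 := fun h0 => hy (by rw [h0, zero_div])
        simp only [Pi.div_apply, if_neg hgy]
        rw [dslope_of_ne _ hyx, dslope_of_ne _ hyx, slope_def_field, slope_def_field, c, c1]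
        simp only [sub_zero]
        field_simp
    · have hne : ∀ᶠ y in 𝓝 x, g y ≠ 0 := hgx.continuousAt.eventually_ne c
      refine (DifferentiableAt.congr_of_eventuallyEq (hfx.div hgx c) ?_).differentiableWithinAt
      filter_upwards [hne] with y hy
      simp [hy]
  · intro x hx
    by_cases c : g x = 0
    · simp [c, (h x hx c).1]
    · simp [c]; field_simp

end liouville

section thetas
variable {p : ℂ}

lemma zpow_invariant {P : ℂ → Prop} (hp0 : p ≠ 0) (h : ∀ x ≠ 0, (P x ↔ P (p * x))) (n : ℤ) :
    ∀ x ≠ 0, (P x ↔ P (p ^ n * x)) := by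
  induction n using Int.induction_on with
  | zero => intro x hx; simp
  | succ n ih =>
    intro x hx
    rw [ih x hx, h _ (by positivity), zpow_add_one₀ hp0, mul_comm (p ^ (n:ℤ)) p, mul_assoc]
  | pred n ih =>
    intro x hx
    rw [ih x hx, h (p ^ (-(n:ℤ) - 1) * x) (by positivity), ← mul_assoc, ← zpow_one_add₀ hp0]
    ring_nf

lemma theta_zero_iff_mul (hp : ‖p‖ < 1) (hp0 : p ≠ 0) (x : ℂ) (hx : x ≠ 0) :
    theta p x = 0 ↔ theta p (p * x) = 0 := by
  rw [theta_p_mul hp hp0 hx]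
  simp [hx]

lemma theta_zpow_zero (hp : ‖p‖ < 1) (hp0 : p ≠ 0) (n : ℤ) : theta p (p ^ n) = 0 := by
  have := (zpow_invariant (P := fun x => theta p x = 0) hp0 (theta_zero_iff_mul hp hp0) n 1
    one_ne_zero).1 (theta_one hp)
  simpa using this

lemma theta_eq_one_sub (hp : ‖p‖ < 1) (z : ℂ) :
    theta p z = (1 - z) * (qpoch (p * z) p * qpoch (p * z⁻¹) p) := by
  unfold theta; rw [qpoch_succ hp z]; ring

lemma theta_zero_zpow (hp : ‖p‖ < 1) (hp0 : p ≠ 0) {x : ℂ} (hx : x ≠ 0) (h : theta p x = 0) :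
    ∃ n : ℤ, x = p ^ n := by
  have hpn : 0 < ‖p‖ := norm_pos_iff.2 hp0
  obtain ⟨n, hn1, hn2⟩ := exists_mem_Ioc_zpow (norm_pos_iff.2 hx) ((one_lt_inv₀ hpn).2 hp)
  have hw0 : p ^ (n + 1) * x ≠ 0 := by positivity
  have hw : theta p (p ^ (n + 1) * x) = 0 :=
    (zpow_invariant (P := fun x => theta p x = 0) hp0 (theta_zero_iff_mul hp hp0) (n + 1) x hx).1 h
  have e : ‖p ^ (n + 1) * x‖ = ‖p‖ ^ (n + 1) * ‖x‖ := by rw [norm_mul, norm_zpow]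
  have hz : 0 < ‖p‖ ^ (n + 1) := by positivity
  rw [inv_zpow, inv_lt_iff_one_lt_mul₀ (by positivity)] at hn1
  rw [inv_zpow, le_inv_comm₀ (by positivity) (by positivity)] at hn2
  have h1 : ‖p ^ (n + 1) * x‖ ≤ 1 := by
    rw [e]
    calc _ ≤ ‖x‖⁻¹ * ‖x‖ := by gcongr
      _ = 1 := by field_simp
  have h2 : ‖p‖ < ‖p ^ (n + 1) * x‖ := by
    rw [e, zpow_add_one₀ hpn.ne']
    nlinarith
  rcases h1.lt_or_eq with h3 | h3
  · exact absurd hw (theta_ne_zero hp h3 h2)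
  · rw [theta_eq_one_sub hp] at hw
    have a1 : qpoch (p * (p ^ (n + 1) * x)) p ≠ 0 :=
      qpoch_ne_zero hp (by rw [norm_mul, h3]; simpa using hp)
    have a2 : qpoch (p * (p ^ (n + 1) * x)⁻¹) p ≠ 0 :=
      qpoch_ne_zero hp (by rw [norm_mul, norm_inv, h3]; simpa using hp)
    have : 1 - p ^ (n + 1) * x = 0 := by
      have a3 := mul_ne_zero a1 a2
      by_contra hne
      have a4 := mul_ne_zero hne a3
      apply a4
      linear_combination hw
    refine ⟨-(n + 1), ?_⟩
    rw [zpow_neg]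
    refine eq_inv_of_mul_eq_one_left ?_
    linear_combination -this

lemma theta_deriv_ne (hp : ‖p‖ < 1) (hp0 : p ≠ 0) {x : ℂ} (hx : x ≠ 0) (h : theta p x = 0) :
    deriv (theta p) x ≠ 0 := by
  have key : ∀ x ≠ 0, ((theta p x = 0 ∧ deriv (theta p) x ≠ 0) ↔
      (theta p (p * x) = 0 ∧ deriv (theta p) (p * x) ≠ 0)) := by
    intro x hx
    rw [← theta_zero_iff_mul hp hp0 x hx]
    refine and_congr_right (fun h0 => ?_)
    have e : (fun z => theta p (p * z)) =ᶠ[𝓝 x] fun z => - z⁻¹ * theta p z := by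
      filter_upwards [isOpen_compl_singleton.mem_nhds (show x ∈ ({0}ᶜ : Set ℂ) from hx)] with z hz
      exact theta_p_mul hp hp0 hz
    have d1 : HasDerivAt (fun z => theta p (p * z)) (deriv (theta p) (p * x) * p) x := by
      have a := (theta_differentiableAt hp (mul_ne_zero hp0 hx)).hasDerivAt
      have b : HasDerivAt (fun z : ℂ => p * z) p x := by simpa using (hasDerivAt_id x).const_mul p
      exact a.comp x b
    have d2 : HasDerivAt (fun z => - z⁻¹ * theta p z)
        ((-(-(x^2)⁻¹)) * theta p x + (-x⁻¹) * deriv (theta p) x) x :=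
      (hasDerivAt_inv hx).neg.mul (theta_differentiableAt hp hx).hasDerivAt
    have d3 := (d2.congr_of_eventuallyEq e).unique d1
    rw [h0, mul_zero, zero_add] at d3
    constructor
    · intro hh h1
      rw [h1, zero_mul] at d3
      simp [hx, hh] at d3
    · intro hh h1
      rw [h1, mul_zero] at d3
      simp [hp0, hh] at d3
  obtain ⟨n, rfl⟩ := theta_zero_zpow hp hp0 hx h
  have base : theta p 1 = 0 ∧ deriv (theta p) 1 ≠ 0 := by
    refine ⟨theta_one hp, ?_⟩
    have e : theta p = fun z => (1 - z) * (qpoch (p * z) p * qpoch (p * z⁻¹) p) := by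
      ext z; exact theta_eq_one_sub hp z
    have hd : DifferentiableAt ℂ (fun z => qpoch (p * z) p * qpoch (p * z⁻¹) p) 1 := by
      refine DifferentiableAt.mul ?_ ?_
      · exact (qpoch_differentiable hp _).comp (1:ℂ) (f := fun z => p * z) (by fun_prop)
      · exact (qpoch_differentiable hp _).comp (1:ℂ) (f := fun z => p * z⁻¹)
          (by fun_prop (disch := simp))
    have h1 : HasDerivAt (fun z : ℂ => 1 - z) (-1) 1 := by
      simpa using (hasDerivAt_id (1:ℂ)).const_sub 1
    have := (h1.mul hd.hasDerivAt).deriv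
    rw [e]
    change deriv ((fun z : ℂ => 1 - z) * (fun z => qpoch (p * z) p * qpoch (p * z⁻¹) p)) 1 ≠ 0
    rw [this]
    have := qpoch_ne_zero hp hp
    simp [this]
  have := (zpow_invariant (P := fun x => theta p x = 0 ∧ deriv (theta p) x ≠ 0) hp0 key n 1
    one_ne_zero).1 base
  simpa using this.2

end thetas


/-- the six-fold theta product -/
noncomputable def Qt (p a b c1 c2 c3 c4 z : ℂ) : ℂ :=
  theta p (a * z) * theta p (b * z) * (theta p (c1 * z) * theta p (c2 * z) * theta p (c3 * z) * theta p (c4 * z))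

noncomputable def Prod4 (p a c1 c2 c3 c4 : ℂ) : ℂ :=
  theta p (a * c1) * theta p (a * c2) * theta p (a * c3) * theta p (a * c4)

noncomputable def NN (p a b c1 c2 c3 c4 z : ℂ) : ℂ :=
  theta p (z ^ 2) * (theta p (a * z) * theta p (a * z⁻¹) * Prod4 p b c1 c2 c3 c4
    - theta p (b * z) * theta p (b * z⁻¹) * Prod4 p a c1 c2 c3 c4)
  - b * theta p (a * b⁻¹) * (z⁻¹ * Qt p a b c1 c2 c3 c4 z - z ^ 3 * Qt p a b c1 c2 c3 c4 z⁻¹)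

lemma theta_at (hp : ‖p‖ < 1) {f : ℂ → ℂ} {x : ℂ} (hf : DifferentiableAt ℂ f x) (h : f x ≠ 0) :
    DifferentiableAt ℂ (fun z => theta p (f z)) x :=
  (theta_differentiableAt hp h).comp x hf

lemma theta_cp (hp : ‖p‖ < 1) (hp0 : p ≠ 0) {a z : ℂ} (ha : a ≠ 0) (hz : z ≠ 0) :
    theta p (a * (p * z)) = - (a * z)⁻¹ * theta p (a * z) := by
  rw [← theta_p_mul hp hp0 (mul_ne_zero ha hz)]; congr 1; ring

lemma theta_cpinv (hp : ‖p‖ < 1) (hp0 : p ≠ 0) {a z : ℂ} (ha : a ≠ 0) (hz : z ≠ 0) :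
    theta p (a * (p * z)⁻¹) = - (a * p⁻¹ * z⁻¹) * theta p (a * z⁻¹) := by
  have := theta_p_mul hp hp0 (z := a * (p * z)⁻¹) (by positivity)
  rw [show p * (a * (p * z)⁻¹) = a * z⁻¹ by field_simp] at this
  rw [this]; field_simp

lemma Qt_p (hp : ‖p‖ < 1) (hp0 : p ≠ 0) {a b c1 c2 c3 c4 z : ℂ} (ha : a ≠ 0) (hb : b ≠ 0)
    (h1 : c1 ≠ 0) (h2 : c2 ≠ 0) (h3 : c3 ≠ 0) (h4 : c4 ≠ 0) (hz : z ≠ 0)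
    (H : a * b * c1 * c2 * c3 * c4 = p) :
    Qt p a b c1 c2 c3 c4 (p * z) = p⁻¹ * (z ^ 6)⁻¹ * Qt p a b c1 c2 c3 c4 z := by
  unfold Qt
  rw [theta_cp hp hp0 ha hz, theta_cp hp hp0 hb hz, theta_cp hp hp0 h1 hz, theta_cp hp hp0 h2 hz,
    theta_cp hp hp0 h3 hz, theta_cp hp hp0 h4 hz, ← H]
  field_simp

lemma Qt_pinv (hp : ‖p‖ < 1) (hp0 : p ≠ 0) {a b c1 c2 c3 c4 z : ℂ} (ha : a ≠ 0) (hb : b ≠ 0)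
    (h1 : c1 ≠ 0) (h2 : c2 ≠ 0) (h3 : c3 ≠ 0) (h4 : c4 ≠ 0) (hz : z ≠ 0)
    (H : a * b * c1 * c2 * c3 * c4 = p) :
    Qt p a b c1 c2 c3 c4 (p * z)⁻¹ = p⁻¹ ^ 5 * (z ^ 6)⁻¹ * Qt p a b c1 c2 c3 c4 z⁻¹ := by
  have := Qt_p hp hp0 (z := (p * z)⁻¹) ha hb h1 h2 h3 h4 (by positivity) H
  rw [show p * (p * z)⁻¹ = z⁻¹ by field_simp] at this
  rw [this]; field_simp

lemma theta_sq_p (hp : ‖p‖ < 1) (hp0 : p ≠ 0) {z : ℂ} (hz : z ≠ 0) :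
    theta p ((p * z) ^ 2) = p⁻¹ * (z ^ 4)⁻¹ * theta p (z ^ 2) := by
  rw [show (p * z) ^ 2 = (p * z ^ 2) * (p * 1) by ring,
    theta_cp hp hp0 (by positivity) one_ne_zero, mul_one, theta_p_mul hp hp0 (by positivity)]
  field_simp

lemma NN_p (hp : ‖p‖ < 1) (hp0 : p ≠ 0) {a b c1 c2 c3 c4 z : ℂ} (ha : a ≠ 0) (hb : b ≠ 0)
    (h1 : c1 ≠ 0) (h2 : c2 ≠ 0) (h3 : c3 ≠ 0) (h4 : c4 ≠ 0) (hz : z ≠ 0)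
    (H : a * b * c1 * c2 * c3 * c4 = p) :
    NN p a b c1 c2 c3 c4 (p * z) = (p ^ 2)⁻¹ * (z ^ 6)⁻¹ * NN p a b c1 c2 c3 c4 z := by
  unfold NN
  rw [Qt_p hp hp0 ha hb h1 h2 h3 h4 hz H, Qt_pinv hp hp0 ha hb h1 h2 h3 h4 hz H,
    theta_sq_p hp hp0 hz, theta_cp hp hp0 ha hz, theta_cp hp hp0 hb hz,
    theta_cpinv hp hp0 ha hz, theta_cpinv hp hp0 hb hz]
  field_simp

lemma NN_zero_sq_one {a b c1 c2 c3 c4 z : ℂ} (hp : ‖p‖ < 1) (hz : z ^ 2 = 1) :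
    NN p a b c1 c2 c3 c4 z = 0 := by
  have hz0 : z ≠ 0 := by rintro rfl; simp at hz
  have e : z⁻¹ = z := inv_eq_of_mul_eq_one_left (by linear_combination hz)
  unfold NN
  rw [hz, theta_one hp, e]
  linear_combination (b * theta p (a * b⁻¹) * z * Qt p a b c1 c2 c3 c4 z) * hz

lemma NN_zero_sq_p (hp : ‖p‖ < 1) (hp0 : p ≠ 0) {a b c1 c2 c3 c4 z : ℂ} (ha : a ≠ 0) (hb : b ≠ 0)
    (h1 : c1 ≠ 0) (h2 : c2 ≠ 0) (h3 : c3 ≠ 0) (h4 : c4 ≠ 0) (hz : z ^ 2 = p)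
    (H : a * b * c1 * c2 * c3 * c4 = p) :
    NN p a b c1 c2 c3 c4 z = 0 := by
  have hz0 : z ≠ 0 := by rintro rfl; simp at hz; exact hp0 hz.symm
  have e : Qt p a b c1 c2 c3 c4 z = p⁻¹ * z ^ 6 * Qt p a b c1 c2 c3 c4 z⁻¹ := by
    have := Qt_p hp hp0 (z := z⁻¹) ha hb h1 h2 h3 h4 (by positivity) H
    rw [show p * z⁻¹ = z by rw [← hz]; field_simp] at this
    rw [this]; field_simp
  have t0 : theta p p = 0 := by simpa using theta_zpow_zero hp hp0 1
  unfold NN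
  rw [hz, t0, e, ← hz]
  field_simp
  ring

lemma NN_zero_a (hp : ‖p‖ < 1) {a b c1 c2 c3 c4 : ℂ} (ha : a ≠ 0) (hb : b ≠ 0) :
    NN p a b c1 c2 c3 c4 a = 0 := by
  have e : theta p (b * a⁻¹) = - (b * a⁻¹) * theta p (a * b⁻¹) := by
    have := theta_inv hp (z := a * b⁻¹) (by positivity)
    rw [show (a * b⁻¹)⁻¹ = b * a⁻¹ by field_simp] at this
    exact this
  unfold NN Qt Prod4
  rw [mul_inv_cancel₀ ha, theta_one hp, e]
  rw [mul_comm c1 a, mul_comm c2 a, mul_comm c3 a, mul_comm c4 a, mul_comm b a, pow_two]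
  ring

lemma NN_inv (hp : ‖p‖ < 1) {a b c1 c2 c3 c4 z : ℂ} (hz : z ≠ 0) :
    NN p a b c1 c2 c3 c4 z⁻¹ = - (z ^ 2)⁻¹ * NN p a b c1 c2 c3 c4 z := by
  unfold NN
  rw [inv_inv, inv_pow, theta_inv hp (by positivity)]
  field_simp
  ring

lemma NN_zero_b (hp : ‖p‖ < 1) {a b c1 c2 c3 c4 : ℂ} (ha : a ≠ 0) (hb : b ≠ 0) :
    NN p a b c1 c2 c3 c4 b = 0 := by
  unfold NN Qt Prod4
  rw [mul_inv_cancel₀ hb, theta_one hp]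
  rw [mul_comm c1 b, mul_comm c2 b, mul_comm c3 b, mul_comm c4 b, pow_two]
  field_simp
  ring

noncomputable def GG (p a z : ℂ) : ℂ := theta p (z ^ 2) * (theta p (a * z) * theta p (a * z⁻¹))

lemma GG_p (hp : ‖p‖ < 1) (hp0 : p ≠ 0) {a z : ℂ} (ha : a ≠ 0) (hz : z ≠ 0) :
    GG p a (p * z) = (p ^ 2)⁻¹ * (z ^ 6)⁻¹ * GG p a z := by
  unfold GG
  rw [theta_sq_p hp hp0 hz, theta_cp hp hp0 ha hz, theta_cpinv hp hp0 ha hz]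
  field_simp

lemma Qt_diff (hp : ‖p‖ < 1) {a b c1 c2 c3 c4 : ℂ} (ha : a ≠ 0) (hb : b ≠ 0)
    (h1 : c1 ≠ 0) (h2 : c2 ≠ 0) (h3 : c3 ≠ 0) (h4 : c4 ≠ 0) {z : ℂ} (hz : z ≠ 0) :
    DifferentiableAt ℂ (Qt p a b c1 c2 c3 c4) z := by
  have t : ∀ c : ℂ, c ≠ 0 → DifferentiableAt ℂ (fun z => theta p (c * z)) z := fun c hc =>
    theta_at hp (by fun_prop) (by positivity)
  exact ((t a ha).mul (t b hb)).mul ((((t _ h1).mul (t _ h2)).mul (t _ h3)).mul (t _ h4))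

lemma NN_diff (hp : ‖p‖ < 1) {a b c1 c2 c3 c4 : ℂ} (ha : a ≠ 0) (hb : b ≠ 0)
    (h1 : c1 ≠ 0) (h2 : c2 ≠ 0) (h3 : c3 ≠ 0) (h4 : c4 ≠ 0) {z : ℂ} (hz : z ≠ 0) :
    DifferentiableAt ℂ (NN p a b c1 c2 c3 c4) z := by
  have t : ∀ c : ℂ, c ≠ 0 → DifferentiableAt ℂ (fun z => theta p (c * z)) z := fun c hc =>
    theta_at hp (by fun_prop) (by positivity)
  have t' : ∀ c : ℂ, c ≠ 0 → DifferentiableAt ℂ (fun z => theta p (c * z⁻¹)) z := fun c hc =>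
    theta_at hp (by fun_prop (disch := assumption)) (by positivity)
  have t2 : DifferentiableAt ℂ (fun z => theta p (z ^ 2)) z :=
    theta_at hp (by fun_prop) (by positivity)
  have q1 := Qt_diff hp ha hb h1 h2 h3 h4 hz
  have q2 : DifferentiableAt ℂ (fun z => Qt p a b c1 c2 c3 c4 z⁻¹) z :=
    (Qt_diff hp ha hb h1 h2 h3 h4 (inv_ne_zero hz)).comp z (differentiableAt_inv hz)
  have i1 : DifferentiableAt ℂ (fun z : ℂ => z⁻¹) z := differentiableAt_inv hz
  have i3 : DifferentiableAt ℂ (fun z : ℂ => z ^ 3) z := by fun_prop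
  exact (t2.mul ((((t a ha).mul (t' a ha)).mul_const _).sub (((t b hb).mul (t' b hb)).mul_const _))).sub
    (((i1.mul q1).sub (i3.mul q2)).const_mul _)

lemma theta_zero_move (hp : ‖p‖ < 1) (hp0 : p ≠ 0) {x y : ℂ} (hx : x ≠ 0) (hy : y ≠ 0)
    (h1 : theta p x = 0) (h2 : theta p y = 0) : theta p (x * y) = 0 := by
  obtain ⟨n, rfl⟩ := theta_zero_zpow hp hp0 hx h1
  obtain ⟨m, rfl⟩ := theta_zero_zpow hp hp0 hy h2
  rw [← zpow_add₀ hp0]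
  exact theta_zpow_zero hp hp0 _

lemma theta_zero_inv (hp : ‖p‖ < 1) {x : ℂ} (hx : x ≠ 0)
    (h1 : theta p x = 0) : theta p x⁻¹ = 0 := by
  rw [theta_inv hp hx, h1, mul_zero]

lemma NN_zero_of_GG (hp : ‖p‖ < 1) (hp0 : p ≠ 0) {a b c1 c2 c3 c4 z : ℂ} (ha : a ≠ 0) (hb : b ≠ 0)
    (h1 : c1 ≠ 0) (h2 : c2 ≠ 0) (h3 : c3 ≠ 0) (h4 : c4 ≠ 0) (hz : z ≠ 0)
    (H : a * b * c1 * c2 * c3 * c4 = p) (hG : GG p a z = 0) : NN p a b c1 c2 c3 c4 z = 0 := by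
  have inv : ∀ n : ℤ, ∀ x ≠ 0, (NN p a b c1 c2 c3 c4 x = 0 ↔ NN p a b c1 c2 c3 c4 (p ^ n * x) = 0) := by
    intro n
    refine zpow_invariant (P := fun x => NN p a b c1 c2 c3 c4 x = 0) hp0 ?_ n
    intro x hx
    rw [NN_p hp hp0 ha hb h1 h2 h3 h4 hx H]
    simp [hp0, hx]
  unfold GG at hG
  rcases mul_eq_zero.1 hG with h | h
  · obtain ⟨n, hn⟩ := theta_zero_zpow hp hp0 (by positivity) h
    rcases Int.even_or_odd' n with ⟨m, hm | hm⟩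
    · have hy : ((p ^ m)⁻¹ * z) ^ 2 = 1 := by
        rw [mul_pow, hn, hm, inv_pow, ← zpow_natCast, ← zpow_mul, mul_comm m]
        exact inv_mul_cancel₀ (by positivity)
      have := (inv m _ (by positivity)).1 (NN_zero_sq_one (a := a) (b := b) (c1 := c1) (c2 := c2) (c3 := c3) (c4 := c4) hp hy)
      rwa [← mul_assoc, mul_inv_cancel₀ (by positivity), one_mul] at this
    · have hy : ((p ^ m)⁻¹ * z) ^ 2 = p := by
        rw [mul_pow, hn, hm, inv_pow, ← zpow_natCast, ← zpow_mul, mul_comm m, zpow_add_one₀ hp0]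
        rw [← mul_assoc, Nat.cast_ofNat, inv_mul_cancel₀ (by positivity), one_mul]
      have := (inv m _ (by positivity)).1 (NN_zero_sq_p hp hp0 ha hb h1 h2 h3 h4 hy H)
      rwa [← mul_assoc, mul_inv_cancel₀ (by positivity), one_mul] at this
  · rcases mul_eq_zero.1 h with h | h
    · obtain ⟨n, hn⟩ := theta_zero_zpow hp hp0 (by positivity) h
      have : z = p ^ n * a⁻¹ := by rw [← hn]; field_simp
      rw [this]
      refine (inv n _ (by positivity)).1 ?_
      rw [NN_inv hp ha, NN_zero_a hp ha hb, mul_zero]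
    · obtain ⟨n, hn⟩ := theta_zero_zpow hp hp0 (by positivity) h
      have : z = p ^ (-n) * a := by rw [zpow_neg, ← hn]; field_simp
      rw [this]
      exact (inv (-n) _ ha).1 (NN_zero_a hp ha hb)

lemma hasDeriv_theta_comp (hp : ‖p‖ < 1) {f : ℂ → ℂ} {x f' : ℂ} (hf : HasDerivAt f f' x) (h : f x ≠ 0) :
    HasDerivAt (fun z => theta p (f z)) (deriv (theta p) (f x) * f') x :=
  (theta_differentiableAt hp h).hasDerivAt.comp x hf

lemma GG_deriv (hp : ‖p‖ < 1) (hp0 : p ≠ 0) {a z : ℂ} (ha : a ≠ 0) (hz : z ≠ 0)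
    (hA : theta p (a ^ 2) ≠ 0) (hG : GG p a z = 0) : deriv (GG p a) z ≠ 0 := by
  have d1 : HasDerivAt (fun z => theta p (z ^ 2)) (deriv (theta p) (z ^ 2) * (2 * z)) z := by
    have : HasDerivAt (fun z : ℂ => z ^ 2) (2 * z) z := by simpa using hasDerivAt_pow 2 z
    exact hasDeriv_theta_comp hp this (by positivity)
  have d2 : HasDerivAt (fun z => theta p (a * z)) (deriv (theta p) (a * z) * a) z := by
    have : HasDerivAt (fun z : ℂ => a * z) a z := by simpa using (hasDerivAt_id z).const_mul a
    exact hasDeriv_theta_comp hp this (by positivity)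
  have d3 : HasDerivAt (fun z => theta p (a * z⁻¹)) (deriv (theta p) (a * z⁻¹) * (a * -(z ^ 2)⁻¹)) z := by
    exact hasDeriv_theta_comp hp ((hasDerivAt_inv hz).const_mul a) (by positivity)
  have d := (d1.mul (d2.mul d3)).deriv
  have e : deriv (GG p a) z = _ := d
  rw [e]
  have two : (2:ℂ) ≠ 0 := two_ne_zero
  -- pairwise non-vanishing
  have n23 : ¬ (theta p (a * z) = 0 ∧ theta p (a * z⁻¹) = 0) := by
    rintro ⟨x, y⟩
    apply hA
    have := theta_zero_move hp hp0 (by positivity) (by positivity) x y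
    rwa [show a * z * (a * z⁻¹) = a ^ 2 by field_simp] at this
  have n12 : ¬ (theta p (z ^ 2) = 0 ∧ theta p (a * z) = 0) := by
    rintro ⟨x, y⟩
    apply hA
    have := theta_zero_move hp hp0 (by positivity) (by positivity)
      (theta_zero_move hp hp0 (by positivity) (by positivity) y y) (theta_zero_inv hp (by positivity) x)
    rwa [show a * z * (a * z) * (z ^ 2)⁻¹ = a ^ 2 by field_simp] at this
  have n13 : ¬ (theta p (z ^ 2) = 0 ∧ theta p (a * z⁻¹) = 0) := by
    rintro ⟨x, y⟩
    apply hA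
    have := theta_zero_move hp hp0 (by positivity) (by positivity)
      (theta_zero_move hp hp0 (by positivity) (by positivity) y y) x
    rwa [show a * z⁻¹ * (a * z⁻¹) * (z ^ 2) = a ^ 2 by field_simp] at this
  unfold GG at hG
  rcases mul_eq_zero.1 hG with h | h
  · have k := theta_deriv_ne hp hp0 (by positivity) h
    have k2 : theta p (a * z) ≠ 0 := fun hh => n12 ⟨h, hh⟩
    have k3 : theta p (a * z⁻¹) ≠ 0 := fun hh => n13 ⟨h, hh⟩
    simp only [h, zero_mul, add_zero]
    exact mul_ne_zero (mul_ne_zero k (mul_ne_zero two hz)) (mul_ne_zero k2 k3)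
  · rcases mul_eq_zero.1 h with h | h
    · have k := theta_deriv_ne hp hp0 (by positivity) h
      have k2 : theta p (z ^ 2) ≠ 0 := fun hh => n12 ⟨hh, h⟩
      have k3 : theta p (a * z⁻¹) ≠ 0 := fun hh => n23 ⟨h, hh⟩
      simp only [Pi.mul_apply, h, zero_mul, add_zero, mul_zero, zero_add]
      exact mul_ne_zero k2 (mul_ne_zero (mul_ne_zero k ha) k3)
    · have k := theta_deriv_ne hp hp0 (by positivity) h
      have k2 : theta p (z ^ 2) ≠ 0 := fun hh => n13 ⟨hh, h⟩
      have k3 : theta p (a * z) ≠ 0 := fun hh => n23 ⟨hh, h⟩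
      simp only [Pi.mul_apply, h, zero_mul, add_zero, mul_zero, zero_add]
      have k4 : (a * -(z ^ 2)⁻¹) ≠ 0 := mul_ne_zero ha (neg_ne_zero.2 (by positivity))
      exact mul_ne_zero k2 (mul_ne_zero k3 (mul_ne_zero k k4))

lemma NN_generic (hp : ‖p‖ < 1) (hp0 : p ≠ 0) {a b c1 c2 c3 c4 : ℂ} (ha : a ≠ 0) (hb : b ≠ 0)
    (h1 : c1 ≠ 0) (h2 : c2 ≠ 0) (h3 : c3 ≠ 0) (h4 : c4 ≠ 0)
    (H : a * b * c1 * c2 * c3 * c4 = p) (hA : theta p (a ^ 2) ≠ 0) (hB : GG p a b ≠ 0) :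
    ∀ z ≠ 0, NN p a b c1 c2 c3 c4 z = 0 := by
  have dN : DifferentiableOn ℂ (NN p a b c1 c2 c3 c4) {0}ᶜ := fun z hz =>
    (NN_diff hp ha hb h1 h2 h3 h4 hz).differentiableWithinAt
  have dG : DifferentiableOn ℂ (GG p a) {0}ᶜ := fun z hz => by
    have hz : z ≠ 0 := hz
    have a1 : DifferentiableAt ℂ (fun z => theta p (z ^ 2)) z :=
      theta_at hp (by fun_prop) (by positivity)
    have a2 : DifferentiableAt ℂ (fun z => theta p (a * z)) z :=
      theta_at hp (by fun_prop) (by positivity)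
    have a3 : DifferentiableAt ℂ (fun z => theta p (a * z⁻¹)) z :=
      theta_at hp (by fun_prop (disch := assumption)) (by positivity)
    exact (a1.mul (a2.mul a3)).differentiableWithinAt
  obtain ⟨k, dk, hk⟩ := punctured_divide dN dG (fun x hx hG =>
    ⟨NN_zero_of_GG hp hp0 ha hb h1 h2 h3 h4 hx H hG, GG_deriv hp hp0 ha hx hA hG⟩)
  have dkp : DifferentiableOn ℂ (fun x => k (p * x) - k x) {0}ᶜ := by
    refine DifferentiableOn.sub (dk.comp (f := fun x => p * x) (by fun_prop) ?_) dk
    intro x hx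
    exact mul_ne_zero hp0 hx
  have per : ∀ x ≠ 0, k (p * x) - k x = 0 := by
    refine punctured_mul dkp dG ?_ hb hB
    intro x hx
    have e1 := NN_p hp hp0 ha hb h1 h2 h3 h4 hx H
    rw [hk _ (mul_ne_zero hp0 hx), hk x hx, GG_p hp hp0 ha hx] at e1
    have : (p ^ 2)⁻¹ * (x ^ 6)⁻¹ ≠ 0 := by positivity
    refine (mul_eq_zero.1 (?_ : ((p ^ 2)⁻¹ * (x ^ 6)⁻¹) * _ = 0)).resolve_left this
    linear_combination e1
  have kc := punctured_const (norm_pos_iff.2 hp0) hp k dk (fun x hx => sub_eq_zero.1 (per x hx))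
  intro z hz
  have eb := hk b hb
  rw [NN_zero_b hp ha hb] at eb
  have kb : k b = 0 := (mul_eq_zero.1 eb.symm).resolve_left hB
  rw [hk z hz, kc z hz b hb, kb, mul_zero]

lemma theta_neg_one (hp : ‖p‖ < 1) : theta p (-1) ≠ 0 := by
  rw [theta_eq_one_sub hp]
  refine mul_ne_zero (by norm_num) (mul_ne_zero (qpoch_ne_zero hp (by simpa using hp))
    (qpoch_ne_zero hp ?_))
  rw [norm_mul, norm_inv]; simpa using hp

lemma exists_theta_sq (hp : ‖p‖ < 1) {c : ℂ} (hc : c ≠ 0) : ∃ a ≠ 0, theta p (a ^ 2 * c) ≠ 0 := by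
  obtain ⟨a, ha⟩ := IsAlgClosed.exists_pow_nat_eq (-c⁻¹) (n := 2) (by norm_num)
  refine ⟨a, ?_, ?_⟩
  · rintro rfl
    simp at ha
    exact hc ha
  · rw [ha, neg_mul, inv_mul_cancel₀ hc]
    exact theta_neg_one hp

/-- The bracket theta identity. -/
lemma NN_eq_zero (hp : ‖p‖ < 1) (hp0 : p ≠ 0) {a b c1 c2 c3 c4 : ℂ} (ha : a ≠ 0) (hb : b ≠ 0)
    (h1 : c1 ≠ 0) (h2 : c2 ≠ 0) (h3 : c3 ≠ 0) (h4 : c4 ≠ 0)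
    (H : a * b * c1 * c2 * c3 * c4 = p) (hab : theta p (a * b) ≠ 0) {z : ℂ} (hz : z ≠ 0) :
    NN p a b c1 c2 c3 c4 z = 0 := by
  set m := a * b with hm
  have hm0 : m ≠ 0 := by positivity
  have dF : DifferentiableOn ℂ (fun x => NN p x (m * x⁻¹) c1 c2 c3 c4 z) {0}ᶜ := by
    intro x hx
    have hx : x ≠ 0 := hx
    have t : ∀ c : ℂ, c ≠ 0 → DifferentiableAt ℂ (fun x => theta p (x * c)) x := fun c hc =>
      theta_at hp (by fun_prop) (by positivity)
    have t' : ∀ c : ℂ, c ≠ 0 → DifferentiableAt ℂ (fun x => theta p (m * x⁻¹ * c)) x := fun c hc =>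
      theta_at hp (by fun_prop (disch := assumption)) (by positivity)
    have t1 : DifferentiableAt ℂ (fun x => theta p (x * (m * x⁻¹)⁻¹)) x :=
      theta_at hp (by fun_prop (disch := first | assumption | positivity)) (by positivity)
    have i1 : DifferentiableAt ℂ (fun x : ℂ => m * x⁻¹) x := by fun_prop (disch := assumption)
    have P1 : DifferentiableAt ℂ (fun x => Prod4 p x c1 c2 c3 c4) x :=
      (((t _ h1).mul (t _ h2)).mul (t _ h3)).mul (t _ h4)
    have P2 : DifferentiableAt ℂ (fun x => Prod4 p (m * x⁻¹) c1 c2 c3 c4) x :=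
      (((t' _ h1).mul (t' _ h2)).mul (t' _ h3)).mul (t' _ h4)
    have hzi := inv_ne_zero hz
    have Q : ∀ y ≠ 0, DifferentiableAt ℂ (fun x => Qt p x (m * x⁻¹) c1 c2 c3 c4 y) x := fun y hy =>
      ((t _ hy).mul (t' _ hy)).mul_const _
    refine DifferentiableAt.differentiableWithinAt ?_
    exact (((((t _ hz).mul (t _ hzi)).mul P2).sub (((t' _ hz).mul (t' _ hzi)).mul P1)).const_mul _).sub
      ((i1.mul t1).mul (((Q z hz).const_mul _).sub ((Q _ hzi).const_mul _)))
  have dT : ∀ c ≠ 0, DifferentiableOn ℂ (fun x => theta p (x ^ 2 * c)) {0}ᶜ := by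
    intro c hc x hx
    have hx : x ≠ 0 := hx
    exact (theta_at hp (by fun_prop) (by positivity)).differentiableWithinAt
  obtain ⟨x1, hx1, g1⟩ := exists_theta_sq hp (one_ne_zero (α := ℂ))
  obtain ⟨x2, hx2, g2⟩ := exists_theta_sq hp (show (m ^ 2)⁻¹ ≠ 0 by positivity)
  obtain ⟨x3, hx3, g3⟩ := exists_theta_sq hp (show m⁻¹ ≠ 0 by positivity)
  have key := punctured_mul dF (dT _ (show m⁻¹ ≠ 0 by positivity)) (fun x hx =>
    punctured_mul (dF.mul (dT _ (show m⁻¹ ≠ 0 by positivity))) (dT _ (show (m ^ 2)⁻¹ ≠ 0 by positivity)) (fun x hx =>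
    punctured_mul ((dF.mul (dT _ (show m⁻¹ ≠ 0 by positivity))).mul (dT _ (show (m ^ 2)⁻¹ ≠ 0 by positivity)))
      (dT 1 one_ne_zero) (fun x hx => ?_) hx1 g1 x hx) hx2 g2 x hx) hx3 g3 a ha
  · have e : m * a⁻¹ = b := by rw [hm]; field_simp
    simpa only [e] using key
  · by_cases c1' : theta p (x ^ 2 * 1) = 0
    · rw [c1', mul_zero]
    by_cases c2' : theta p (x ^ 2 * (m ^ 2)⁻¹) = 0
    · simp [c2']
    by_cases c3' : theta p (x ^ 2 * m⁻¹) = 0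
    · simp [c3']
    have : NN p x (m * x⁻¹) c1 c2 c3 c4 z = 0 := by
      refine NN_generic hp hp0 hx (by positivity) h1 h2 h3 h4 ?_ (by simpa using c1') ?_ z hz
      · rw [← H]; field_simp
      · unfold GG
        refine mul_ne_zero ?_ (mul_ne_zero ?_ ?_)
        · intro h
          apply c2'
          have := theta_zero_inv hp (by positivity) h
          rw [← this]; congr 1; field_simp
        · rwa [show x * (m * x⁻¹) = m by field_simp]
        · rwa [show x * (m * x⁻¹)⁻¹ = x ^ 2 * m⁻¹ by field_simp]
    simp [this]


lemma circle_norm (u : ℝ) : ‖Complex.exp (u * Complex.I)‖ = 1 := Complex.norm_exp_ofReal_mul_I u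

lemma circle_rot (f : ℂ → ℂ) (φ : ℝ) :
    ∫ u in (0:ℝ)..(2 * Real.pi), f (Complex.exp ((-φ - u : ℝ) * Complex.I)) =
    ∫ u in (0:ℝ)..(2 * Real.pi), f (Complex.exp (u * Complex.I)) := by
  have per : Function.Periodic (fun u : ℝ => f (Complex.exp (u * Complex.I))) (2 * Real.pi) := by
    intro u
    simp only
    congr 1
    have := Complex.exp_periodic (u * Complex.I)
    rw [← this]; congr 1; push_cast; ring
  rw [intervalIntegral.integral_comp_sub_left (fun u : ℝ => f (Complex.exp (u * Complex.I)))]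
  have := per.intervalIntegral_add_eq (-φ - 2 * Real.pi) 0
  rw [zero_add] at this
  rw [← this]
  congr 1 ; ring

noncomputable def kk (p q a b c d e f z : ℂ) : ℂ :=
  z⁻¹ * ((egamma (q * (a * z)) p q * egamma (a * z⁻¹) p q) * (egamma (q * (b * z)) p q * egamma (b * z⁻¹) p q) *
   (egamma (q * (c * z)) p q * egamma (c * z⁻¹) p q) * (egamma (q * (d * z)) p q * egamma (d * z⁻¹) p q) *
   (egamma (q * (e * z)) p q * egamma (e * z⁻¹) p q) * (egamma (q * (f * z)) p q * egamma (f * z⁻¹) p q)) *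
    theta q ((z ^ 2)⁻¹)

lemma egamma_at (hp : ‖p‖ < 1) (hq : ‖q‖ < 1) {f : ℂ → ℂ} {x : ℂ} (hf : DifferentiableAt ℂ f x)
    (h : f x ≠ 0) (h1 : ‖f x‖ < 1) :
    DifferentiableAt ℂ (fun z => egamma (f z) p q) x :=
  (egamma_differentiableAt hp hq h h1).comp x hf

lemma kk_diff (hp : ‖p‖ < 1) (hq : ‖q‖ < 1) (hq0 : q ≠ 0) {a b c d e f z : ℂ}
    (ha : a ≠ 0) (hb : b ≠ 0) (hc : c ≠ 0) (hd : d ≠ 0) (he : e ≠ 0) (hf : f ≠ 0)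
    (ha1 : ‖a‖ < 1) (hb1 : ‖b‖ < 1) (hc1 : ‖c‖ < 1) (hd1 : ‖d‖ < 1) (he1 : ‖e‖ < 1) (hf1 : ‖f‖ < 1)
    (hz1 : 1 ≤ ‖z‖) (hz2 : ‖q * z‖ ≤ 1) : DifferentiableAt ℂ (kk p q a b c d e f) z := by
  have hz : z ≠ 0 := by rintro rfl; simp at hz1; linarith
  have t : ∀ a : ℂ, a ≠ 0 → ‖a‖ < 1 → DifferentiableAt ℂ
      (fun z => egamma (q * (a * z)) p q * egamma (a * z⁻¹) p q) z := by
    intro a ha ha1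
    refine DifferentiableAt.mul ?_ ?_
    · refine egamma_at hp hq (by fun_prop) (by positivity) ?_
      calc ‖q * (a * z)‖ = ‖a‖ * ‖q * z‖ := by rw [← norm_mul]; congr 1; ring
        _ ≤ ‖a‖ * 1 := by gcongr
        _ < 1 := by linarith
    · refine egamma_at hp hq (by fun_prop (disch := assumption)) (by positivity) ?_
      rw [norm_mul, norm_inv]
      calc ‖a‖ * ‖z‖⁻¹ ≤ ‖a‖ * 1 := by gcongr; exact inv_le_one_of_one_le₀ hz1
        _ < 1 := by linarith
  have th : DifferentiableAt ℂ (fun z => theta q ((z ^ 2)⁻¹)) z :=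
    theta_at hq (by fun_prop (disch := first | assumption | positivity)) (by positivity)
  exact ((differentiableAt_inv hz).mul ((((((t a ha ha1).mul (t b hb hb1)).mul (t c hc hc1)).mul
    (t d hd hd1)).mul (t e he he1)).mul (t f hf hf1))).mul th

lemma kk_anti (hq : ‖q‖ < 1) (hq0 : q ≠ 0) {a b c d e f z : ℂ} (hz : z ≠ 0) :
    kk p q a b c d e f ((q * z)⁻¹) = - kk p q a b c d e f z := by
  unfold kk
  have e1 : ∀ a : ℂ, q * (a * (q * z)⁻¹) = a * z⁻¹ := fun a => by field_simp
  have e2 : ∀ a : ℂ, a * (q * z)⁻¹⁻¹ = q * (a * z) := fun a => by rw [inv_inv]; ring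
  simp only [e1, e2]
  have e3 : theta q (((q * z)⁻¹ ^ 2)⁻¹) = - (q * z ^ 2)⁻¹ * theta q ((z ^ 2)⁻¹) := by
    rw [← theta_p_div hq0 ((z^2)⁻¹), inv_inv, ← theta_p_mul hq hq0 (by positivity)]
    congr 1; field_simp
  rw [e3]
  have key : (q * z)⁻¹⁻¹ * (- (q * z ^ 2)⁻¹) = - z⁻¹ := by field_simp
  linear_combination (((egamma (q * (a * z)) p q * egamma (a * z⁻¹) p q) * (egamma (q * (b * z)) p q * egamma (b * z⁻¹) p q) *
   (egamma (q * (c * z)) p q * egamma (c * z⁻¹) p q) * (egamma (q * (d * z)) p q * egamma (d * z⁻¹) p q) *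
   (egamma (q * (e * z)) p q * egamma (e * z⁻¹) p q) * (egamma (q * (f * z)) p q * egamma (f * z⁻¹) p q)) *
    theta q ((z ^ 2)⁻¹)) * key

lemma kk_int (hp : ‖p‖ < 1) (hq : ‖q‖ < 1) (hq0 : q ≠ 0) {a b c d e f : ℂ}
    (ha : a ≠ 0) (hb : b ≠ 0) (hc : c ≠ 0) (hd : d ≠ 0) (he : e ≠ 0) (hf : f ≠ 0)
    (ha1 : ‖a‖ < 1) (hb1 : ‖b‖ < 1) (hc1 : ‖c‖ < 1) (hd1 : ‖d‖ < 1) (he1 : ‖e‖ < 1) (hf1 : ‖f‖ < 1) :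
    ∫ u in (0:ℝ)..(2 * Real.pi), kk p q a b c d e f (Complex.exp (u * Complex.I)) = 0 := by
  have hqn : 0 < ‖q‖ := norm_pos_iff.2 hq0
  have key := Complex.circleIntegral_sub_center_inv_smul_eq_of_differentiable_on_annulus_off_countable
    (f := kk p q a b c d e f) (c := 0) (r := 1) (R := ‖q‖⁻¹) (s := ∅) one_pos
    ((one_le_inv₀ hqn).2 hq.le) Set.countable_empty ?_ ?_
  · have c1 : ∀ R : ℝ, 0 < R → (∮ z in C(0, R), (z - 0)⁻¹ • kk p q a b c d e f z) =
        Complex.I * ∫ u in (0:ℝ)..(2 * Real.pi), kk p q a b c d e f (R * Complex.exp (u * Complex.I)) := by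
      intro R hR
      rw [circleIntegral, ← intervalIntegral.integral_const_mul]
      congr 1; ext u
      have : (R:ℂ) ≠ 0 := by exact_mod_cast hR.ne'
      simp only [deriv_circleMap, circleMap, smul_eq_mul, zero_add, sub_zero]
      field_simp
    rw [c1 _ one_pos, c1 _ (by positivity)] at key
    have key := mul_left_cancel₀ Complex.I_ne_zero key
    simp only [Complex.ofReal_one, one_mul] at key
    have e1 : ∀ u : ℝ, kk p q a b c d e f (((‖q‖⁻¹ : ℝ) : ℂ) * Complex.exp (u * Complex.I)) =
        - kk p q a b c d e f (Complex.exp ((-(Complex.arg q) - u : ℝ) * Complex.I)) := by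
      intro u
      have hz : ((‖q‖⁻¹ : ℝ) : ℂ) * Complex.exp (u * Complex.I) ≠ 0 :=
        mul_ne_zero (by exact_mod_cast (inv_pos.2 hqn).ne') (Complex.exp_ne_zero _)
      rw [eq_neg_iff_add_eq_zero, ← neg_eq_iff_add_eq_zero, ← kk_anti hq hq0 hz]
      congr 1
      have hqq : q = ‖q‖ * Complex.exp (Complex.arg q * Complex.I) := (Complex.norm_mul_exp_arg_mul_I q).symm
      have hn : ((‖q‖ : ℝ) : ℂ) ≠ 0 := by exact_mod_cast hqn.ne'
      rw [show q * (((‖q‖⁻¹ : ℝ) : ℂ) * Complex.exp (u * Complex.I)) =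
        Complex.exp (Complex.arg q * Complex.I) * Complex.exp (u * Complex.I) by
          conv_lhs => rw [hqq]
          simp only [norm_mul, Complex.norm_exp_ofReal_mul_I, Complex.norm_real, norm_norm, mul_one]
          push_cast
          field_simp, ← Complex.exp_add, ← Complex.exp_neg]
      congr 1; push_cast; ring
    simp_rw [e1] at key
    rw [intervalIntegral.integral_neg, circle_rot] at key
    have := key
    linear_combination (1/2) * (-this)
  · intro z hz
    have hz1 : ‖z‖ ≤ ‖q‖⁻¹ := by simpa using hz.1
    have hz2 : 1 ≤ ‖z‖ := by simpa using hz.2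
    refine (kk_diff hp hq hq0 ha hb hc hd he hf ha1 hb1 hc1 hd1 he1 hf1 hz2 ?_).continuousAt.continuousWithinAt
    rw [norm_mul]
    calc ‖q‖ * ‖z‖ ≤ ‖q‖ * ‖q‖⁻¹ := by gcongr
      _ = 1 := mul_inv_cancel₀ hqn.ne'
  · intro z hz
    have hz1 : ‖z‖ < ‖q‖⁻¹ := by simpa using hz.1.1
    have hz2 : 1 < ‖z‖ := by simpa using hz.1.2
    refine kk_diff hp hq hq0 ha hb hc hd he hf ha1 hb1 hc1 hd1 he1 hf1 hz2.le ?_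
    rw [norm_mul]
    calc ‖q‖ * ‖z‖ ≤ ‖q‖ * ‖q‖⁻¹ := by gcongr
      _ = 1 := mul_inv_cancel₀ hqn.ne'

/-- density in holomorphic form -/
noncomputable def DD (p q z : ℂ) : ℂ := theta p (z ^ 2) * theta q ((z ^ 2)⁻¹)

noncomputable def gg (p q x z : ℂ) : ℂ := egamma (x * z) p q * egamma (x * z⁻¹) p q

noncomputable def WW (p q a b c d e f z : ℂ) : ℂ :=
  gg p q a z * gg p q b z * gg p q c z * gg p q d z * gg p q e z * gg p q f z * DD p q z

noncomputable def II (p q a b c d e f : ℂ) : ℂ :=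
  ∫ u in (0:ℝ)..(2 * Real.pi), WW p q a b c d e f (Complex.exp (u * Complex.I))

lemma EE_pq_ratio (hp : ‖p‖ < 1) (hq : ‖q‖ < 1) (u : ℂ) :
    EE p q u = qpoch u p * qpoch (q * u) q * EE p q (p * q * u) := by
  rw [EE_q hp hq, EE_p hp hq (q * u)]; ring_nf

lemma EE_pq_ratio' (hp : ‖p‖ < 1) (hq : ‖q‖ < 1) (u : ℂ) :
    EE p q u = qpoch u q * qpoch (p * u) p * EE p q (p * q * u) := by
  rw [EE_p hp hq, EE_q hp hq (p * u)]; ring_nf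

lemma norm_pq_lt (hp : ‖p‖ < 1) (hq : ‖q‖ < 1) : ‖p * q‖ < 1 := by
  rw [norm_mul]; exact mul_lt_one_of_nonneg_of_lt_one_left (norm_nonneg _) hp hq.le

lemma DD_eq (hp : ‖p‖ < 1) (hq : ‖q‖ < 1) {z : ℂ} (hz : ‖z‖ = 1) :
    (egamma (z ^ 2) p q * egamma ((z ^ 2)⁻¹) p q)⁻¹ = DD p q z := by
  have hn : ‖z ^ 2‖ = 1 := by rw [norm_pow, hz, one_pow]
  have hn' : ‖(z ^ 2)⁻¹‖ = 1 := by rw [norm_inv, hn, inv_one]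
  have h1 : EE p q (p * q * z ^ 2) ≠ 0 := EE_ne_zero hp hq (by rw [norm_mul, hn, mul_one]; exact norm_pq_lt hp hq)
  have h2 : EE p q (p * q * (z ^ 2)⁻¹) ≠ 0 := EE_ne_zero hp hq (by rw [norm_mul, hn', mul_one]; exact norm_pq_lt hp hq)
  rw [egamma_eq hp hq, egamma_eq hp hq, inv_inv, EE_pq_ratio hp hq (z ^ 2),
    EE_pq_ratio' hp hq ((z ^ 2)⁻¹)]
  unfold DD theta
  rw [inv_inv]
  rw [mul_inv, inv_div, inv_div]
  generalize EE p q (p * q * z ^ 2) = E1 at *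
  generalize EE p q (p * q * (z ^ 2)⁻¹) = E2 at *
  rw [div_mul_div_comm, div_eq_iff (mul_ne_zero h2 h1)]
  ring

lemma DD_diff (hp : ‖p‖ < 1) (hq : ‖q‖ < 1) {z : ℂ} (hz : z ≠ 0) : DifferentiableAt ℂ (DD p q) z :=
  (theta_at (f := fun z => z ^ 2) hp (by fun_prop) (by positivity)).mul
    (theta_at (f := fun z => (z ^ 2)⁻¹) hq (by fun_prop (disch := first | assumption | positivity)) (by positivity))

lemma gg_diff (hp : ‖p‖ < 1) (hq : ‖q‖ < 1) {a z : ℂ} (ha : a ≠ 0) (ha1 : ‖a‖ < 1) (hz : ‖z‖ = 1) :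
    DifferentiableAt ℂ (gg p q a) z := by
  have hz0 : z ≠ 0 := by rintro rfl; simp at hz
  exact (egamma_at (f := fun z => a * z) hp hq (by fun_prop) (by positivity) (by rw [norm_mul, hz, mul_one]; exact ha1)).mul
    (egamma_at (f := fun z => a * z⁻¹) hp hq (by fun_prop (disch := assumption)) (by positivity)
      (by rw [norm_mul, norm_inv, hz, inv_one, mul_one]; exact ha1))

lemma WW_diff (hp : ‖p‖ < 1) (hq : ‖q‖ < 1) {a b c d e f z : ℂ}
    (ha : a ≠ 0) (hb : b ≠ 0) (hc : c ≠ 0) (hd : d ≠ 0) (he : e ≠ 0) (hf : f ≠ 0)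
    (ha1 : ‖a‖ < 1) (hb1 : ‖b‖ < 1) (hc1 : ‖c‖ < 1) (hd1 : ‖d‖ < 1) (he1 : ‖e‖ < 1) (hf1 : ‖f‖ < 1)
    (hz : ‖z‖ = 1) : DifferentiableAt ℂ (WW p q a b c d e f) z := by
  have hz0 : z ≠ 0 := by rintro rfl; simp at hz
  exact ((((((gg_diff hp hq ha ha1 hz).mul (gg_diff hp hq hb hb1 hz)).mul (gg_diff hp hq hc hc1 hz)).mul
   (gg_diff hp hq hd hd1 hz)).mul (gg_diff hp hq he he1 hz)).mul (gg_diff hp hq hf hf1 hz)).mul (DD_diff hp hq hz0)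

lemma circ_integrable {f : ℂ → ℂ} (h : ∀ z : ℂ, ‖z‖ = 1 → DifferentiableAt ℂ f z) :
    IntervalIntegrable (fun u : ℝ => f (Complex.exp (u * Complex.I))) MeasureTheory.volume 0 (2 * Real.pi) := by
  refine Continuous.intervalIntegrable ?_ _ _
  refine continuous_iff_continuousAt.2 fun u => ?_
  exact ContinuousAt.comp (f := fun u : ℝ => Complex.exp (u * Complex.I)) (h _ (circle_norm u)).continuousAt
    (by fun_prop)

lemma gg_shift (hp : ‖p‖ < 1) (hq : ‖q‖ < 1) (hq0 : q ≠ 0) {a z : ℂ} (ha1 : ‖a‖ < 1) (hz : ‖z‖ = 1) :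
    gg p q (q * a) z = theta p (a * z) * theta p (a * z⁻¹) * gg p q a z := by
  unfold gg
  rw [mul_assoc q, mul_assoc q, egamma_shift hp hq hq0 (by rw [norm_mul, hz, mul_one]; exact ha1),
    egamma_shift hp hq hq0 (by rw [norm_mul, norm_inv, hz, inv_one, mul_one]; exact ha1)]
  ring

lemma kk_eq (hp : ‖p‖ < 1) (hq : ‖q‖ < 1) (hq0 : q ≠ 0) {a b c d e f z : ℂ}
    (ha1 : ‖a‖ < 1) (hb1 : ‖b‖ < 1) (hc1 : ‖c‖ < 1) (hd1 : ‖d‖ < 1) (he1 : ‖e‖ < 1) (hf1 : ‖f‖ < 1)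
    (hz : ‖z‖ = 1) : kk p q a b c d e f z =
      z⁻¹ * Qt p a b c d e f z * (gg p q a z * gg p q b z * gg p q c z * gg p q d z * gg p q e z * gg p q f z) *
      theta q ((z ^ 2)⁻¹) := by
  have t : ∀ a : ℂ, ‖a‖ < 1 → egamma (q * (a * z)) p q = theta p (a * z) * egamma (a * z) p q := fun a ha1 =>
    egamma_shift hp hq hq0 (by rw [norm_mul, hz, mul_one]; exact ha1)
  unfold kk Qt gg
  rw [t a ha1, t b hb1, t c hc1, t d hd1, t e he1, t f hf1]
  ring

lemma gg_inv (a z : ℂ) : gg p q a z⁻¹ = gg p q a z := by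
  unfold gg; rw [inv_inv, mul_comm]

lemma II_shift (hp : ‖p‖ < 1) (hp0 : p ≠ 0) (hq : ‖q‖ < 1) (hq0 : q ≠ 0) {a b c d e f : ℂ}
    (ha : a ≠ 0) (hb : b ≠ 0) (hc : c ≠ 0) (hd : d ≠ 0) (he : e ≠ 0) (hf : f ≠ 0)
    (ha1 : ‖a‖ < 1) (hb1 : ‖b‖ < 1) (hc1 : ‖c‖ < 1) (hd1 : ‖d‖ < 1) (he1 : ‖e‖ < 1) (hf1 : ‖f‖ < 1)
    (H : a * b * c * d * e * f = p) (hab : theta p (a * b) ≠ 0) :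
    II p q (q * a) b c d e f * Prod4 p b c d e f = II p q a (q * b) c d e f * Prod4 p a c d e f := by
  have hq1 : ∀ x : ℂ, ‖x‖ < 1 → ‖q * x‖ < 1 := fun x hx => by
    rw [norm_mul]; exact mul_lt_one_of_nonneg_of_lt_one_left (norm_nonneg _) hq hx.le
  have pt : ∀ z : ℂ, ‖z‖ = 1 → WW p q (q * a) b c d e f z * Prod4 p b c d e f -
      WW p q a (q * b) c d e f z * Prod4 p a c d e f =
      b * theta p (a * b⁻¹) * (kk p q a b c d e f z + kk p q a b c d e f z⁻¹) := by
    intro z hz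
    have hz0 : z ≠ 0 := by rintro rfl; simp at hz
    rw [kk_eq hp hq hq0 ha1 hb1 hc1 hd1 he1 hf1 hz,
      kk_eq hp hq hq0 ha1 hb1 hc1 hd1 he1 hf1 (z := z⁻¹) (by rw [norm_inv, hz, inv_one])]
    simp only [gg_inv]
    have e3 : theta q ((z⁻¹ ^ 2)⁻¹) = - (z ^ 2) * theta q ((z ^ 2)⁻¹) := by
      have := theta_inv hq (z := (z ^ 2)⁻¹) (by positivity)
      rw [inv_inv] at this
      rw [← this]; congr 1; rw [inv_pow, inv_inv]
    rw [e3, inv_inv]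
    unfold WW DD
    rw [gg_shift hp hq hq0 ha1 hz, gg_shift hp hq hq0 hb1 hz]
    have N := NN_eq_zero hp hp0 ha hb hc hd he hf H hab hz0
    unfold NN at N
    linear_combination (gg p q a z * gg p q b z * gg p q c z * gg p q d z * gg p q e z * gg p q f z *
      theta q ((z ^ 2)⁻¹)) * N
  have i1 := circ_integrable (fun z hz => WW_diff hp hq (mul_ne_zero hq0 ha) hb hc hd he hf (hq1 _ ha1) hb1 hc1 hd1 he1 hf1 hz)
  have i2 := circ_integrable (fun z hz => WW_diff hp hq ha (mul_ne_zero hq0 hb) hc hd he hf ha1 (hq1 _ hb1) hc1 hd1 he1 hf1 hz)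
  have i3 := circ_integrable (fun z hz => kk_diff hp hq hq0 ha hb hc hd he hf ha1 hb1 hc1 hd1 he1 hf1
    (z := z) hz.ge (by rw [norm_mul, hz, mul_one]; exact hq.le))
  have J := kk_int hp hq hq0 ha hb hc hd he hf ha1 hb1 hc1 hd1 he1 hf1
  have J2 : ∫ u in (0:ℝ)..(2 * Real.pi), kk p q a b c d e f (Complex.exp (u * Complex.I))⁻¹ = 0 := by
    have := circle_rot (kk p q a b c d e f) 0
    rw [J] at this
    rw [← this]
    congr 1; ext u
    rw [← Complex.exp_neg]; congr 2; push_cast; ring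
  have i4 : IntervalIntegrable (fun u : ℝ => kk p q a b c d e f (Complex.exp (u * Complex.I))⁻¹) MeasureTheory.volume 0 (2 * Real.pi) := by
    refine circ_integrable (f := fun z => kk p q a b c d e f z⁻¹) (fun z hz => ?_)
    have hz0 : z ≠ 0 := by rintro rfl; simp at hz
    have hzi : ‖z⁻¹‖ = 1 := by rw [norm_inv, hz, inv_one]
    exact (kk_diff hp hq hq0 ha hb hc hd he hf ha1 hb1 hc1 hd1 he1 hf1
      (z := z⁻¹) hzi.ge (by rw [norm_mul, hzi, mul_one]; exact hq.le)).comp z (differentiableAt_inv hz0)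
  rw [← sub_eq_zero]
  unfold II
  rw [← intervalIntegral.integral_mul_const, ← intervalIntegral.integral_mul_const,
    ← intervalIntegral.integral_sub (i1.mul_const _) (i2.mul_const _)]
  simp_rw [fun u : ℝ => pt _ (circle_norm u)]
  rw [intervalIntegral.integral_const_mul, intervalIntegral.integral_add i3 i4, J, J2]
  simp


lemma param_integral {G : ℂ → ℝ → ℂ} {U : Set ℂ} (hU : IsOpen U)
    (hc : ∀ x ∈ U, ∀ u : ℝ, ContinuousAt (fun y : ℂ × ℝ => G y.1 y.2) (x, u))
    (hd : ∀ x ∈ U, ∀ u : ℝ, DifferentiableAt ℂ (fun x => G x u) x) (a b : ℝ) :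
    DifferentiableOn ℂ (fun x => ∫ u in a..b, G x u) U := by
  intro x0 hx0
  obtain ⟨r, hr, hball⟩ := Metric.nhds_basis_closedBall.mem_iff.1 (hU.mem_nhds hx0)
  have cont : ∀ x ∈ U, Continuous (G x) := fun x hx => continuous_iff_continuousAt.2 fun u =>
    ContinuousAt.comp (f := fun u : ℝ => (x, u)) (hc x hx u) (by fun_prop)
  obtain ⟨C, hC⟩ := ((isCompact_closedBall x0 r).prod (isCompact_uIcc (a := a) (b := b))).exists_bound_of_continuousOn
    (f := fun y : ℂ × ℝ => G y.1 y.2)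
    (fun y hy => (hc y.1 (hball hy.1) y.2).continuousWithinAt)
  have r2 : 0 < r / 2 := by positivity
  have sub : ∀ x ∈ Metric.ball x0 (r / 2), Metric.closedBall x (r / 2) ⊆ Metric.closedBall x0 r := by
    intro x hx
    refine Metric.closedBall_subset_closedBall' ?_
    have := Metric.mem_ball.1 hx
    linarith
  have key := intervalIntegral.hasDerivAt_integral_of_dominated_loc_of_deriv_le
    (μ := MeasureTheory.volume) (a := a) (b := b)
    (F := G) (F' := fun x u => deriv (fun x => G x u) x) (x₀ := x0) (s := Metric.ball x0 (r / 2))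
    (bound := fun _ => C / (r / 2)) (Metric.ball_mem_nhds _ r2) ?_ ?_ ?_ ?_ ?_ ?_
  · exact key.2.differentiableAt.differentiableWithinAt
  · filter_upwards [hU.mem_nhds hx0] with x hx
    exact (cont x hx).aestronglyMeasurable
  · exact (cont x0 hx0).intervalIntegrable _ _
  · -- measurability of derivative
    have hlim : ∀ u, Tendsto (fun n : ℕ => ((r / (n + 1 : ℝ) : ℝ) : ℂ)⁻¹ • (G (x0 + ((r / (n + 1 : ℝ) : ℝ) : ℂ)) u - G x0 u)) atTop
        (𝓝 (deriv (fun x => G x u) x0)) := by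
      intro u
      have h1 := (hd x0 hx0 u).hasDerivAt.tendsto_slope_zero
      refine h1.comp (tendsto_nhdsWithin_iff.2 ⟨?_, ?_⟩)
      · have : Tendsto (fun n : ℕ => r / (n + 1 : ℝ)) atTop (𝓝 0) :=
          tendsto_const_nhds.div_atTop (tendsto_atTop_add_const_right _ _ tendsto_natCast_atTop_atTop)
        have h2 := (Complex.continuous_ofReal.tendsto 0).comp this
        rw [Complex.ofReal_zero] at h2
        exact h2
      · refine Eventually.of_forall fun n => ?_
        simp only [Set.mem_compl_iff, Set.mem_singleton_iff, Complex.ofReal_eq_zero]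
        positivity
    refine aestronglyMeasurable_of_tendsto_ae atTop ?_ (Eventually.of_forall hlim)
    intro n
    have hmem : x0 + ((r / (n + 1 : ℝ) : ℝ) : ℂ) ∈ U := ?_
    · exact (((cont _ hmem).sub (cont _ hx0)).const_smul (((r / (n + 1 : ℝ) : ℝ) : ℂ)⁻¹)).aestronglyMeasurable
    refine hball ?_
    rw [Metric.mem_closedBall, dist_eq_norm, add_sub_cancel_left, Complex.norm_real, Real.norm_eq_abs,
      abs_of_nonneg (by positivity)]
    rw [div_le_iff₀ (by positivity)]
    nlinarith [(Nat.cast_nonneg n : (0:ℝ) ≤ n)]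
  · refine Eventually.of_forall fun u hu x hx => ?_
    refine Complex.norm_deriv_le_of_forall_mem_sphere_norm_le r2 ?_ ?_
    · refine DifferentiableOn.diffContOnCl_ball (U := U) (fun y hy => (hd y hy u).differentiableWithinAt)
        ((sub x hx).trans hball)
    · intro z hz
      exact hC (z, u) ⟨sub x hx (Metric.sphere_subset_closedBall hz), Set.uIoc_subset_uIcc hu⟩
  · exact continuous_const.intervalIntegrable _ _
  · refine Eventually.of_forall fun u hu x hx => ?_
    exact (hd x (hball (Metric.ball_subset_closedBall.trans (Metric.closedBall_subset_closedBall (by linarith)) hx)) u).hasDerivAt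

lemma egamma_contAt {X : Type*} [TopologicalSpace X] (hp : ‖p‖ < 1) (hq : ‖q‖ < 1) {f : X → ℂ} {x : X}
    (hf : ContinuousAt f x) (h : f x ≠ 0) (h1 : ‖f x‖ < 1) :
    ContinuousAt (fun z => egamma (f z) p q) x :=
  ContinuousAt.comp (f := f) (egamma_differentiableAt hp hq h h1).continuousAt hf

lemma II_diff (hp : ‖p‖ < 1) (hq : ‖q‖ < 1) {U : Set ℂ} (hU : IsOpen U) {a b c d e f : ℂ → ℂ}
    (ha : ∀ x ∈ U, DifferentiableAt ℂ a x ∧ a x ≠ 0 ∧ ‖a x‖ < 1)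
    (hb : ∀ x ∈ U, DifferentiableAt ℂ b x ∧ b x ≠ 0 ∧ ‖b x‖ < 1)
    (hc : ∀ x ∈ U, DifferentiableAt ℂ c x ∧ c x ≠ 0 ∧ ‖c x‖ < 1)
    (hd : ∀ x ∈ U, DifferentiableAt ℂ d x ∧ d x ≠ 0 ∧ ‖d x‖ < 1)
    (he : ∀ x ∈ U, DifferentiableAt ℂ e x ∧ e x ≠ 0 ∧ ‖e x‖ < 1)
    (hf : ∀ x ∈ U, DifferentiableAt ℂ f x ∧ f x ≠ 0 ∧ ‖f x‖ < 1) :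
    DifferentiableOn ℂ (fun x => II p q (a x) (b x) (c x) (d x) (e x) (f x)) U := by
  have E0 : ∀ u : ℝ, Complex.exp (u * Complex.I) ≠ 0 := fun u => Complex.exp_ne_zero _
  have n1 : ∀ (x : ℂ) (u : ℝ), ‖x * Complex.exp (u * Complex.I)‖ = ‖x‖ := fun x u => by
    rw [norm_mul, circle_norm, mul_one]
  have n2 : ∀ (x : ℂ) (u : ℝ), ‖x * (Complex.exp (u * Complex.I))⁻¹‖ = ‖x‖ := fun x u => by
    rw [norm_mul, norm_inv, circle_norm, inv_one, mul_one]
  have C : ∀ t : ℂ → ℂ, (∀ x ∈ U, DifferentiableAt ℂ t x ∧ t x ≠ 0 ∧ ‖t x‖ < 1) → ∀ x ∈ U, ∀ u : ℝ,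
      ContinuousAt (fun y : ℂ × ℝ => gg p q (t y.1) (Complex.exp (y.2 * Complex.I))) (x, u) := by
    intro t ht x hx u
    obtain ⟨h1, h2, h3⟩ := ht x hx
    have ct : ContinuousAt (fun y : ℂ × ℝ => t y.1) (x, u) :=
      ContinuousAt.comp (f := fun y : ℂ × ℝ => y.1) (g := t) h1.continuousAt continuousAt_fst
    have ce : ContinuousAt (fun y : ℂ × ℝ => Complex.exp (y.2 * Complex.I)) (x, u) := by fun_prop
    refine ContinuousAt.mul ?_ ?_
    · exact egamma_contAt hp hq (ct.mul ce) (mul_ne_zero h2 (E0 u)) ((n1 _ u).trans_lt h3)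
    · exact egamma_contAt hp hq (ct.mul (ce.inv₀ (E0 u))) (mul_ne_zero h2 (inv_ne_zero (E0 u))) ((n2 _ u).trans_lt h3)
  have D : ∀ t : ℂ → ℂ, (∀ x ∈ U, DifferentiableAt ℂ t x ∧ t x ≠ 0 ∧ ‖t x‖ < 1) → ∀ x ∈ U, ∀ u : ℝ,
      DifferentiableAt ℂ (fun y : ℂ => gg p q (t y) (Complex.exp (u * Complex.I))) x := by
    intro t ht x hx u
    obtain ⟨h1, h2, h3⟩ := ht x hx
    refine DifferentiableAt.mul ?_ ?_
    · exact egamma_at hp hq (h1.mul_const _) (mul_ne_zero h2 (E0 u)) ((n1 _ u).trans_lt h3)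
    · exact egamma_at hp hq (h1.mul_const _) (mul_ne_zero h2 (inv_ne_zero (E0 u))) ((n2 _ u).trans_lt h3)
  refine param_integral hU (G := fun x u => WW p q (a x) (b x) (c x) (d x) (e x) (f x) (Complex.exp (u * Complex.I))) ?_ ?_ 0 (2 * Real.pi)
  · intro x hx u
    have cD : ContinuousAt (fun y : ℂ × ℝ => DD p q (Complex.exp (y.2 * Complex.I))) (x, u) :=
      ContinuousAt.comp (f := fun y : ℂ × ℝ => Complex.exp (y.2 * Complex.I)) (g := DD p q) (x := (x, u)) (DD_diff hp hq (E0 u)).continuousAt (by fun_prop)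
    exact ((((((C a ha x hx u).mul (C b hb x hx u)).mul (C c hc x hx u)).mul (C d hd x hx u)).mul
      (C e he x hx u)).mul (C f hf x hx u)).mul cD
  · intro x hx u
    exact ((((((D a ha x hx u).mul (D b hb x hx u)).mul (D c hc x hx u)).mul (D d hd x hx u)).mul
      (D e he x hx u)).mul (D f hf x hx u)).mul_const _

noncomputable def RR (p q a b c d e f : ℂ) : ℂ :=
  egamma (a * b) p q * (egamma (a * c) p q * egamma (a * d) p q * egamma (a * e) p q * egamma (a * f) p q) *
  (egamma (b * c) p q * egamma (b * d) p q * egamma (b * e) p q * egamma (b * f) p q) *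
  (egamma (c * d) p q * egamma (c * e) p q * egamma (c * f) p q * egamma (d * e) p q *
   egamma (d * f) p q * egamma (e * f) p q)

/-- admissible parameters -/
def Adm (p q a b c d e f : ℂ) : Prop :=
  ‖a‖ < 1 ∧ ‖b‖ < 1 ∧ ‖c‖ < 1 ∧ ‖d‖ < 1 ∧ ‖e‖ < 1 ∧ ‖f‖ < 1 ∧ a * b * c * d * e * f = p * q

lemma lt_one_mul {x y : ℂ} (hx : ‖x‖ < 1) (hy : ‖y‖ < 1) : ‖x * y‖ < 1 := by
  rw [norm_mul]; exact mul_lt_one_of_nonneg_of_lt_one_left (norm_nonneg _) hx hy.le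

lemma pair_bounds (hp0 : p ≠ 0) (hq0 : q ≠ 0) {a b c d e f : ℂ}
    (hc1 : ‖c‖ < 1) (hd1 : ‖d‖ < 1) (he1 : ‖e‖ < 1) (hf1 : ‖f‖ < 1)
    (H : a * b * c * d * e * f = p * q) : ‖p * q‖ < ‖a * b‖ := by
  have h : a * b * (c * d * e * f) = p * q := by rw [← H]; ring
  rw [← h, norm_mul]
  have h1 : ‖c * d * e * f‖ < 1 := lt_one_mul (lt_one_mul (lt_one_mul hc1 hd1) he1) hf1
  have h2 : 0 < ‖a * b‖ := by
    rw [norm_pos_iff]; intro h0; rw [h0, zero_mul] at h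
    exact mul_ne_zero hp0 hq0 h.symm
  nlinarith

lemma eg_pair_ne (hp : ‖p‖ < 1) (hp0 : p ≠ 0) (hq : ‖q‖ < 1) (hq0 : q ≠ 0) {a b c d e f : ℂ}
    (h : Adm p q a b c d e f) : egamma (a * b) p q ≠ 0 := by
  obtain ⟨ha1, hb1, hc1, hd1, he1, hf1, H⟩ := h
  exact egamma_ne_zero hp hq (lt_one_mul ha1 hb1) (pair_bounds hp0 hq0 hc1 hd1 he1 hf1 H)

lemma RR_ne (hp : ‖p‖ < 1) (hp0 : p ≠ 0) (hq : ‖q‖ < 1) (hq0 : q ≠ 0) {a b c d e f : ℂ}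
    (h : Adm p q a b c d e f) : RR p q a b c d e f ≠ 0 := by
  obtain ⟨ha, hb, hc, hd, he, hf, H⟩ := h
  have k := fun a b c d e f h => eg_pair_ne hp hp0 hq hq0 (a := a) (b := b) (c := c) (d := d) (e := e) (f := f) h
  unfold RR
  have m : ∀ {x y : ℂ}, x ≠ 0 → y ≠ 0 → x * y ≠ 0 := fun h1 h2 => mul_ne_zero h1 h2
  refine m (m (m ?_ (m (m (m ?_ ?_) ?_) ?_)) (m (m (m ?_ ?_) ?_) ?_)) (m (m (m (m (m ?_ ?_) ?_) ?_) ?_) ?_)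
  · exact k a b c d e f ⟨ha, hb, hc, hd, he, hf, H⟩
  · exact k a c b d e f ⟨ha, hc, hb, hd, he, hf, by rw [← H]; ring⟩
  · exact k a d b c e f ⟨ha, hd, hb, hc, he, hf, by rw [← H]; ring⟩
  · exact k a e b c d f ⟨ha, he, hb, hc, hd, hf, by rw [← H]; ring⟩
  · exact k a f b c d e ⟨ha, hf, hb, hc, hd, he, by rw [← H]; ring⟩
  · exact k b c a d e f ⟨hb, hc, ha, hd, he, hf, by rw [← H]; ring⟩
  · exact k b d a c e f ⟨hb, hd, ha, hc, he, hf, by rw [← H]; ring⟩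
  · exact k b e a c d f ⟨hb, he, ha, hc, hd, hf, by rw [← H]; ring⟩
  · exact k b f a c d e ⟨hb, hf, ha, hc, hd, he, by rw [← H]; ring⟩
  · exact k c d a b e f ⟨hc, hd, ha, hb, he, hf, by rw [← H]; ring⟩
  · exact k c e a b d f ⟨hc, he, ha, hb, hd, hf, by rw [← H]; ring⟩
  · exact k c f a b d e ⟨hc, hf, ha, hb, hd, he, by rw [← H]; ring⟩
  · exact k d e a b c f ⟨hd, he, ha, hb, hc, hf, by rw [← H]; ring⟩
  · exact k d f a b c e ⟨hd, hf, ha, hb, hc, he, by rw [← H]; ring⟩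
  · exact k e f a b c d ⟨he, hf, ha, hb, hc, hd, by rw [← H]; ring⟩

lemma Adm_ne (hp0 : p ≠ 0) (hq0 : q ≠ 0) {a b c d e f : ℂ} (h : Adm p q a b c d e f) :
    a ≠ 0 ∧ b ≠ 0 ∧ c ≠ 0 ∧ d ≠ 0 ∧ e ≠ 0 ∧ f ≠ 0 := by
  have H := h.2.2.2.2.2.2
  have := mul_ne_zero hp0 hq0
  refine ⟨?_, ?_, ?_, ?_, ?_, ?_⟩ <;> (rintro rfl; apply this; rw [← H]; ring)

lemma F_shift (hp : ‖p‖ < 1) (hp0 : p ≠ 0) (hq : ‖q‖ < 1) (hq0 : q ≠ 0) {a b c d e f : ℂ}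
    (ha1 : ‖a‖ < 1) (hb1 : ‖b‖ < 1) (hc1 : ‖c‖ < 1) (hd1 : ‖d‖ < 1) (he1 : ‖e‖ < 1) (hf1 : ‖f‖ < 1)
    (H : a * b * c * d * e * f = p) :
    II p q (q * a) b c d e f / RR p q (q * a) b c d e f = II p q a (q * b) c d e f / RR p q a (q * b) c d e f := by
  have A1 : Adm p q (q * a) b c d e f := ⟨lt_one_mul hq ha1, hb1, hc1, hd1, he1, hf1, by rw [← H]; ring⟩
  have A2 : Adm p q a (q * b) c d e f := ⟨ha1, lt_one_mul hq hb1, hc1, hd1, he1, hf1, by rw [← H]; ring⟩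
  obtain ⟨-, hb, hc, hd, he, hf⟩ := Adm_ne hp0 hq0 A1
  have ha := (Adm_ne hp0 hq0 A2).1
  have hab : theta p (a * b) ≠ 0 := by
    refine theta_ne_zero hp (lt_one_mul ha1 hb1) ?_
    have h : a * b * (c * d * e * f) = p := by rw [← H]; ring
    have h1 : ‖c * d * e * f‖ < 1 := lt_one_mul (lt_one_mul (lt_one_mul hc1 hd1) he1) hf1
    have h2 : 0 < ‖a * b‖ := norm_pos_iff.2 (mul_ne_zero ha hb)
    calc ‖p‖ = ‖a * b‖ * ‖c * d * e * f‖ := by rw [← norm_mul, h]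
      _ < ‖a * b‖ := by nlinarith
  have S := II_shift hp hp0 hq hq0 ha hb hc hd he hf ha1 hb1 hc1 hd1 he1 hf1 H hab
  rw [div_eq_div_iff (RR_ne hp hp0 hq hq0 A1) (RR_ne hp hp0 hq hq0 A2)]
  have sh : ∀ x y : ℂ, ‖x‖ < 1 → ‖y‖ < 1 → egamma (q * x * y) p q = theta p (x * y) * egamma (x * y) p q := by
    intro x y hx hy
    rw [mul_assoc, egamma_shift hp hq hq0 (lt_one_mul hx hy)]
  unfold RR
  rw [sh a c ha1 hc1, sh a d ha1 hd1, sh a e ha1 he1, sh a f ha1 hf1,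
    sh b c hb1 hc1, sh b d hb1 hd1, sh b e hb1 he1, sh b f hb1 hf1,
    show q * a * b = q * (a * b) by ring, show a * (q * b) = q * (a * b) by ring]
  unfold Prod4 at S
  linear_combination (egamma (q * (a * b)) p q * (egamma (a * c) p q * egamma (a * d) p q * egamma (a * e) p q * egamma (a * f) p q) *
  (egamma (b * c) p q * egamma (b * d) p q * egamma (b * e) p q * egamma (b * f) p q) *
  (egamma (c * d) p q * egamma (c * e) p q * egamma (c * f) p q * egamma (d * e) p q *
   egamma (d * f) p q * egamma (e * f) p q)) * S

lemma RR_diff (hp : ‖p‖ < 1) (hq : ‖q‖ < 1) {x : ℂ} {a b c d e f : ℂ → ℂ}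
    (ha : DifferentiableAt ℂ a x ∧ a x ≠ 0 ∧ ‖a x‖ < 1)
    (hb : DifferentiableAt ℂ b x ∧ b x ≠ 0 ∧ ‖b x‖ < 1)
    (hc : DifferentiableAt ℂ c x ∧ c x ≠ 0 ∧ ‖c x‖ < 1)
    (hd : DifferentiableAt ℂ d x ∧ d x ≠ 0 ∧ ‖d x‖ < 1)
    (he : DifferentiableAt ℂ e x ∧ e x ≠ 0 ∧ ‖e x‖ < 1)
    (hf : DifferentiableAt ℂ f x ∧ f x ≠ 0 ∧ ‖f x‖ < 1) :
    DifferentiableAt ℂ (fun x => RR p q (a x) (b x) (c x) (d x) (e x) (f x)) x := by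
  have g : ∀ {a b : ℂ → ℂ}, (DifferentiableAt ℂ a x ∧ a x ≠ 0 ∧ ‖a x‖ < 1) →
      (DifferentiableAt ℂ b x ∧ b x ≠ 0 ∧ ‖b x‖ < 1) → DifferentiableAt ℂ (fun x => egamma (a x * b x) p q) x :=
    fun ha hb => egamma_at hp hq (ha.1.mul hb.1) (mul_ne_zero ha.2.1 hb.2.1) (lt_one_mul ha.2.2 hb.2.2)
  exact (((g ha hb).mul ((((g ha hc).mul (g ha hd)).mul (g ha he)).mul (g ha hf))).mul
    ((((g hb hc).mul (g hb hd)).mul (g hb he)).mul (g hb hf))).mul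
    ((((((g hc hd).mul (g hc he)).mul (g hc hf)).mul (g hd he)).mul (g hd hf)).mul (g he hf))

/-- Lemma M -/
lemma F_move (hp : ‖p‖ < 1) (hp0 : p ≠ 0) (hq : ‖q‖ < 1) (hq0 : q ≠ 0) {a b a' b' c d e f : ℂ}
    (h : Adm p q a b c d e f) (ha' : ‖a'‖ < 1) (hb' : ‖b'‖ < 1) (hab : a * b = a' * b')
    (hs : ‖a * b‖ < ‖q‖) :
    II p q a b c d e f / RR p q a b c d e f = II p q a' b' c d e f / RR p q a' b' c d e f := by
  obtain ⟨ha, hb, hc, hd, he, hf⟩ := Adm_ne hp0 hq0 h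
  obtain ⟨ha1, hb1, hc1, hd1, he1, hf1, H⟩ := h
  set m := a * b with hm
  have hm0 : m ≠ 0 := by positivity
  have hb0' : b' ≠ 0 := by rintro rfl; rw [mul_zero] at hab; exact hm0 hab
  have ha0' : a' ≠ 0 := by rintro rfl; rw [zero_mul] at hab; exact hm0 hab
  have adm : ∀ x : ℂ, x ≠ 0 → ‖m‖ < ‖x‖ → ‖x‖ < 1 → Adm p q (m * x⁻¹) x c d e f := by
    intro x hx hx1 hx2
    refine ⟨?_, hx2, hc1, hd1, he1, hf1, ?_⟩
    · rw [norm_mul, norm_inv, ← div_eq_mul_inv, div_lt_one (norm_pos_iff.2 hx)]; exact hx1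
    · rw [← H]; field_simp
  have pos : ∀ {x : ℂ}, ‖m‖ < ‖x‖ → x ≠ 0 := fun {x} hx => norm_pos_iff.1 ((norm_nonneg _).trans_lt hx)
  have key := annulus_const (norm_pos_iff.2 hq0) hq (a := ‖m‖) (b := 1) (norm_pos_iff.2 hm0) (by simpa using hs)
    (fun x => II p q (m * x⁻¹) x c d e f / RR p q (m * x⁻¹) x c d e f) ?_ ?_ (x := b) (y := b') ?_ ?_
  · have e1 : m * b⁻¹ = a := by rw [hm]; field_simp
    have e2 : m * b'⁻¹ = a' := by rw [hab]; field_simp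
    simpa only [e1, e2] using key
  · have h0 : ∀ x ∈ {x : ℂ | ‖m‖ < ‖x‖ ∧ ‖x‖ < 1}, DifferentiableAt ℂ (fun x => m * x⁻¹) x ∧ m * x⁻¹ ≠ 0 ∧ ‖m * x⁻¹‖ < 1 := by
      intro x hx
      have hx0 := pos hx.1
      refine ⟨by fun_prop (disch := assumption), by positivity, (adm x hx0 hx.1 hx.2).1⟩
    have h1 : ∀ x ∈ {x : ℂ | ‖m‖ < ‖x‖ ∧ ‖x‖ < 1}, DifferentiableAt ℂ (fun x => x) x ∧ x ≠ 0 ∧ ‖x‖ < 1 := by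
      intro x hx
      exact ⟨by fun_prop, pos hx.1, hx.2⟩
    have hh : ∀ y : ℂ, y ≠ 0 → ‖y‖ < 1 → ∀ x ∈ {x : ℂ | ‖m‖ < ‖x‖ ∧ ‖x‖ < 1},
        DifferentiableAt ℂ (fun _ : ℂ => y) x ∧ y ≠ 0 ∧ ‖y‖ < 1 := fun y h1 h2 x _ => ⟨by fun_prop, h1, h2⟩
    refine DifferentiableOn.div (II_diff hp hq (annulus_isOpen _ _) h0 h1 (hh c hc hc1) (hh d hd hd1) (hh e he he1) (hh f hf hf1)) ?_ ?_
    · intro x hx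
      exact (RR_diff hp hq (h0 x hx) (h1 x hx) (hh c hc hc1 x hx) (hh d hd hd1 x hx) (hh e he he1 x hx) (hh f hf hf1 x hx)).differentiableWithinAt
    · intro x hx
      exact RR_ne hp hp0 hq hq0 (adm x (pos hx.1) hx.1 hx.2)
  · intro x hx1 hx2
    have hx0 : x ≠ 0 := by rintro rfl; simp at hx1; exact absurd hx1 (not_lt.2 (norm_nonneg _))
    have := F_shift hp hp0 hq hq0 (a := m * (q * x)⁻¹) (b := x) ?_ hx2 hc1 hd1 he1 hf1 ?_
    · have e1 : q * (m * (q * x)⁻¹) = m * x⁻¹ := by field_simp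
      rw [e1] at this
      exact this.symm
    · exact (adm (q * x) (pos hx1) hx1 (lt_one_mul hq hx2)).1
    · have e1 : m * (q * x)⁻¹ * x * c * d * e * f = q⁻¹ * (m * c * d * e * f) := by field_simp
      rw [e1, H]; field_simp
  · refine ⟨?_, hb1⟩
    rw [hm, norm_mul]
    have := norm_pos_iff.2 hb
    nlinarith
  · refine ⟨?_, hb'⟩
    rw [hab, norm_mul]
    have := norm_pos_iff.2 hb0'
    nlinarith


lemma mean_val {g : ℂ → ℂ} (hg : ∀ z : ℂ, ‖z‖ ≤ 1 → DifferentiableAt ℂ g z) :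
    ∫ u in (0:ℝ)..(2 * Real.pi), g (Complex.exp (u * Complex.I)) = 2 * Real.pi * g 0 := by
  have hd : DiffContOnCl ℂ g (Metric.ball 0 1) := by
    refine DifferentiableOn.diffContOnCl ?_
    intro z hz
    rw [closure_ball _ one_ne_zero] at hz
    exact (hg z (by simpa using hz)).differentiableWithinAt
  have := hd.circleIntegral_sub_inv_smul (w := 0) (by simp)
  rw [circleIntegral] at this
  have e : ∀ u : ℝ, deriv (circleMap 0 1) u • (circleMap 0 1 u - 0)⁻¹ • g (circleMap 0 1 u) =
      Complex.I * g (Complex.exp (u * Complex.I)) := by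
    intro u
    simp only [deriv_circleMap, circleMap, smul_eq_mul, zero_add, sub_zero, Complex.ofReal_one, one_mul]
    field_simp
  simp_rw [e] at this
  rw [intervalIntegral.integral_const_mul] at this
  refine mul_left_cancel₀ Complex.I_ne_zero ?_
  rw [this, smul_eq_mul]; ring

/-- Poisson type kernel -/
noncomputable def pk (ρ u : ℝ) : ℝ := (1 - ρ ^ 4) / ‖1 + (ρ:ℂ) ^ 2 * Complex.exp (u * Complex.I) ^ 2‖ ^ 2

lemma one_add_ge {ρ : ℝ} (h0 : 0 ≤ ρ) (h1 : ρ < 1) {z : ℂ} (hz : ‖z‖ ≤ 1) : 1 - ρ ^ 2 ≤ ‖1 + (ρ:ℂ) ^ 2 * z ^ 2‖ := by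
  have h := norm_sub_le_norm_add (1:ℂ) ((ρ:ℂ) ^ 2 * z ^ 2)
  rw [norm_one, norm_mul, norm_pow, norm_pow, Complex.norm_real, Real.norm_eq_abs, abs_of_nonneg h0] at h
  have : ρ ^ 2 * ‖z‖ ^ 2 ≤ ρ ^ 2 * 1 := by gcongr; exact pow_le_one₀ (norm_nonneg _) hz
  linarith

lemma one_add_pos {ρ : ℝ} (h0 : 0 ≤ ρ) (h1 : ρ < 1) {z : ℂ} (hz : ‖z‖ ≤ 1) : 0 < ‖1 + (ρ:ℂ) ^ 2 * z ^ 2‖ := by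
  have := one_add_ge h0 h1 hz
  nlinarith

lemma pk_eq {ρ : ℝ} (h0 : 0 ≤ ρ) (h1 : ρ < 1) (u : ℝ) : ((pk ρ u : ℝ) : ℂ) =
    (1 - (ρ:ℂ) ^ 4) / ((1 + (ρ:ℂ) ^ 2 * Complex.exp (u * Complex.I) ^ 2) * (1 + (ρ:ℂ) ^ 2 * (Complex.exp (u * Complex.I))⁻¹ ^ 2)) := by
  unfold pk
  push_cast
  congr 1
  rw [← Complex.mul_conj']
  congr 1
  simp only [map_add, map_one, map_mul, map_pow, Complex.conj_ofReal]
  congr 3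
  rw [← Complex.exp_conj, ← Complex.exp_neg]
  congr 1
  simp

lemma pk_cont {ρ : ℝ} (h0 : 0 ≤ ρ) (h1 : ρ < 1) : Continuous (pk ρ) := by
  unfold pk
  refine Continuous.div continuous_const (by fun_prop) (fun u => ?_)
  have := one_add_pos h0 h1 (circle_norm u).le
  positivity

lemma pk_int {ρ : ℝ} (h0 : 0 ≤ ρ) (h1 : ρ < 1) : ∫ u in (0:ℝ)..(2 * Real.pi), pk ρ u = 2 * Real.pi := by
  have hd : ∀ z : ℂ, ‖z‖ ≤ 1 → DifferentiableAt ℂ (fun z : ℂ => (1 + (ρ:ℂ) ^ 2 * z ^ 2)⁻¹) z := by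
    intro z hz
    have := norm_pos_iff.1 (one_add_pos h0 h1 hz)
    fun_prop (disch := assumption)
  have m := mean_val hd
  have m2 : ∫ u in (0:ℝ)..(2 * Real.pi), (1 + (ρ:ℂ) ^ 2 * (Complex.exp (u * Complex.I))⁻¹ ^ 2)⁻¹ = 2 * (Real.pi : ℂ) := by
    have := circle_rot (fun z : ℂ => (1 + (ρ:ℂ) ^ 2 * z ^ 2)⁻¹) 0
    rw [m] at this
    simp only [ne_eq, OfNat.ofNat_ne_zero, not_false_eq_true, zero_pow, mul_zero, add_zero, inv_one, mul_one] at this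
    rw [← this]
    congr 1; ext u
    rw [← Complex.exp_neg]; congr 5; push_cast; ring
  have i1 := circ_integrable (fun z hz => hd z (le_of_eq hz))
  have i2 : IntervalIntegrable (fun u : ℝ => (1 + (ρ:ℂ) ^ 2 * (Complex.exp (u * Complex.I))⁻¹ ^ 2)⁻¹) MeasureTheory.volume 0 (2 * Real.pi) := by
    refine circ_integrable (f := fun z => (1 + (ρ:ℂ) ^ 2 * z⁻¹ ^ 2)⁻¹) (fun z hz => ?_)
    have hz0 : z ≠ 0 := by rintro rfl; simp at hz
    exact (hd z⁻¹ (by rw [norm_inv, hz, inv_one])).comp z (differentiableAt_inv hz0)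
  have e : ∀ u : ℝ, ((pk ρ u : ℝ) : ℂ) = (1 + (ρ:ℂ) ^ 2 * Complex.exp (u * Complex.I) ^ 2)⁻¹ +
      (1 + (ρ:ℂ) ^ 2 * (Complex.exp (u * Complex.I))⁻¹ ^ 2)⁻¹ - 1 := by
    intro u
    rw [pk_eq h0 h1]
    have n1 := norm_pos_iff.1 (one_add_pos h0 h1 (circle_norm u).le)
    have n2 := norm_pos_iff.1 (one_add_pos h0 h1 (z := (Complex.exp (u * Complex.I))⁻¹) (by rw [norm_inv, circle_norm, inv_one]))
    have hz : Complex.exp (u * Complex.I) * (Complex.exp (u * Complex.I))⁻¹ = 1 := mul_inv_cancel₀ (Complex.exp_ne_zero _)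
    generalize (Complex.exp (u * Complex.I))⁻¹ = w at *
    generalize (Complex.exp (u * Complex.I)) = z at *
    rw [div_eq_iff (mul_ne_zero n1 n2)]
    have : z ^ 2 * w ^ 2 = 1 := by rw [← mul_pow, hz, one_pow]
    field_simp
    linear_combination ((ρ:ℂ) ^ 4) * this
  have : ((∫ u in (0:ℝ)..(2 * Real.pi), pk ρ u : ℝ) : ℂ) = ((2 * Real.pi : ℝ) : ℂ) := by
    rw [← intervalIntegral.integral_ofReal]
    simp_rw [e]
    rw [intervalIntegral.integral_sub (i1.add i2) (continuous_const.intervalIntegrable _ _),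
      intervalIntegral.integral_add i1 i2, m, m2]
    simp
  exact_mod_cast this

lemma pk_nonneg {ρ : ℝ} (h0 : 0 ≤ ρ) (h1 : ρ < 1) (u : ℝ) : 0 ≤ pk ρ u := by
  unfold pk
  have : ρ ^ 4 ≤ 1 := pow_le_one₀ h0 h1.le
  exact div_nonneg (by linarith) (by positivity)

lemma pk_bound {ρ : ℝ} (h0 : 0 ≤ ρ) (h1 : ρ < 1) (u : ℝ) :
    pk ρ u * ‖1 + Complex.exp (u * Complex.I) ^ 2‖ ^ 2 ≤ 4 * (1 - ρ ^ 4) := by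
  unfold pk
  have a1 := one_add_ge h0 h1 (circle_norm u).le
  have a2 := one_add_pos h0 h1 (circle_norm u).le
  set z := Complex.exp (u * Complex.I) with hz
  have a3 : ‖1 + z ^ 2‖ ≤ 2 * ‖1 + (ρ:ℂ) ^ 2 * z ^ 2‖ := by
    have e : 1 + z ^ 2 = (1 + (ρ:ℂ) ^ 2 * z ^ 2) + ((1 - ρ ^ 2 : ℝ) : ℂ) * z ^ 2 := by push_cast; ring
    have n : ‖((1 - ρ ^ 2 : ℝ) : ℂ) * z ^ 2‖ = 1 - ρ ^ 2 := by
      rw [norm_mul, norm_pow, hz, circle_norm, Complex.norm_real, Real.norm_eq_abs, abs_of_nonneg (by nlinarith)]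
      ring
    calc ‖1 + z ^ 2‖ ≤ ‖1 + (ρ:ℂ) ^ 2 * z ^ 2‖ + ‖((1 - ρ ^ 2 : ℝ) : ℂ) * z ^ 2‖ := by rw [e]; exact norm_add_le _ _
      _ ≤ _ := by rw [n]; linarith
  have a4 : ‖1 + z ^ 2‖ ^ 2 ≤ 4 * ‖1 + (ρ:ℂ) ^ 2 * z ^ 2‖ ^ 2 := by
    calc ‖1 + z ^ 2‖ ^ 2 ≤ (2 * ‖1 + (ρ:ℂ) ^ 2 * z ^ 2‖) ^ 2 := by gcongr
      _ = _ := by ring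
  have a5 : ρ ^ 4 ≤ 1 := pow_le_one₀ h0 h1.le
  rw [div_mul_eq_mul_div, div_le_iff₀ (by positivity)]
  nlinarith

lemma poisson_limit {Φ : ℝ → ℂ → ℂ} {ρ0 : ℝ} (h0 : 0 < ρ0) (h1 : ρ0 < 1)
    (hc : ∀ ρ ∈ Set.Icc ρ0 1, ∀ u : ℝ, ContinuousAt (fun y : ℝ × ℝ => Φ y.1 (Complex.exp (y.2 * Complex.I))) (ρ, u))
    (L : ℂ) (hL : ∀ z : ℂ, z ^ 2 = -1 → Φ 1 z = L) :
    Tendsto (fun ρ : ℝ => ∫ u in (0:ℝ)..(2 * Real.pi), (pk ρ u : ℂ) * Φ ρ (Complex.exp (u * Complex.I)))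
      (𝓝[<] 1) (𝓝 (2 * Real.pi * L)) := by
  have hpi := Real.pi_pos
  have cu : ∀ ρ ∈ Set.Icc ρ0 1, Continuous fun u : ℝ => Φ ρ (Complex.exp (u * Complex.I)) := fun ρ hρ =>
    continuous_iff_continuousAt.2 fun u => ContinuousAt.comp (f := fun u : ℝ => (ρ, u))
      (g := fun y : ℝ × ℝ => Φ y.1 (Complex.exp (y.2 * Complex.I))) (hc ρ hρ u) (by fun_prop)
  set K : Set (ℝ × ℝ) := Set.Icc ρ0 1 ×ˢ Set.Icc 0 (2 * Real.pi) with hK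
  have Kc : IsCompact K := isCompact_Icc.prod isCompact_Icc
  have cont : ContinuousOn (fun y : ℝ × ℝ => Φ y.1 (Complex.exp (y.2 * Complex.I)) - L) K := fun y hy =>
    ((hc y.1 hy.1 y.2).sub continuousAt_const).continuousWithinAt
  obtain ⟨M, hM⟩ := Kc.exists_bound_of_continuousOn cont
  have claim : ∀ ε > 0, ∃ C, 0 ≤ C ∧ ∀ y ∈ K, ‖Φ y.1 (Complex.exp (y.2 * Complex.I)) - L‖ ≤
      ε + C * ((1 - y.1) + ‖1 + Complex.exp (y.2 * Complex.I) ^ 2‖ ^ 2) := by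
    intro ε hε
    set S : Set (ℝ × ℝ) := {y ∈ K | ε ≤ ‖Φ y.1 (Complex.exp (y.2 * Complex.I)) - L‖} with hS
    have Sc : IsCompact S := by
      refine Kc.of_isClosed_subset ?_ (fun y hy => hy.1)
      exact (cont.norm).preimage_isClosed_of_isClosed Kc.isClosed isClosed_Ici
    rcases S.eq_empty_or_nonempty with he | hne
    · refine ⟨0, le_rfl, fun y hy => ?_⟩
      by_contra hh
      have : y ∈ S := ⟨hy, by linarith⟩
      rw [he] at this; exact this
    · obtain ⟨y0, hy0, hmin⟩ := Sc.exists_isMinOn hne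
        (f := fun y : ℝ × ℝ => (1 - y.1) + ‖1 + Complex.exp (y.2 * Complex.I) ^ 2‖ ^ 2) (by fun_prop)
      have pos : 0 < (1 - y0.1) + ‖1 + Complex.exp (y0.2 * Complex.I) ^ 2‖ ^ 2 := by
        have b1 : 0 ≤ 1 - y0.1 := sub_nonneg.2 hy0.1.1.2
        have b2 : 0 ≤ ‖1 + Complex.exp (y0.2 * Complex.I) ^ 2‖ ^ 2 := by positivity
        rcases (add_nonneg b1 b2).lt_or_eq with h | h
        · exact h
        · exfalso
          have c1 : y0.1 = 1 := by linarith
          have c2 : ‖1 + Complex.exp (y0.2 * Complex.I) ^ 2‖ = 0 := by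
            have : ‖1 + Complex.exp (y0.2 * Complex.I) ^ 2‖ ^ 2 = 0 := by linarith
            exact pow_eq_zero_iff (two_ne_zero) |>.1 this
          have c3 : Complex.exp (y0.2 * Complex.I) ^ 2 = -1 := by
            have := norm_eq_zero.1 c2
            linear_combination this
          have := hy0.2
          rw [c1, hL _ c3] at this
          simp at this
          linarith
      set m0 := (1 - y0.1) + ‖1 + Complex.exp (y0.2 * Complex.I) ^ 2‖ ^ 2 with hm0
      have M0 : 0 ≤ M := (norm_nonneg _).trans (hM y0 hy0.1)
      refine ⟨M / m0, by positivity, fun y hy => ?_⟩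
      have b1 : 0 ≤ 1 - y.1 := sub_nonneg.2 hy.1.2
      have b2 : 0 ≤ ‖1 + Complex.exp (y.2 * Complex.I) ^ 2‖ ^ 2 := by positivity
      by_cases hh : y ∈ S
      · have h2 : m0 ≤ (1 - y.1) + ‖1 + Complex.exp (y.2 * Complex.I) ^ 2‖ ^ 2 := hmin hh
        calc _ ≤ M := hM y hy
          _ = M / m0 * m0 := by field_simp
          _ ≤ M / m0 * ((1 - y.1) + ‖1 + Complex.exp (y.2 * Complex.I) ^ 2‖ ^ 2) := by gcongr
          _ ≤ _ := by linarith
      · have : ‖Φ y.1 (Complex.exp (y.2 * Complex.I)) - L‖ < ε := by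
          by_contra h3
          exact hh ⟨hy, not_lt.1 h3⟩
        have : 0 ≤ M / m0 * ((1 - y.1) + ‖1 + Complex.exp (y.2 * Complex.I) ^ 2‖ ^ 2) := by positivity
        linarith
  have est : ∀ ε > 0, ∃ C, 0 ≤ C ∧ ∀ ρ, ρ0 ≤ ρ → ρ < 1 →
      ‖(∫ u in (0:ℝ)..(2 * Real.pi), (pk ρ u : ℂ) * Φ ρ (Complex.exp (u * Complex.I))) - 2 * Real.pi * L‖ ≤
        2 * Real.pi * ε + C * (1 - ρ) := by
    intro ε hε
    obtain ⟨C, C0, hC⟩ := claim ε hε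
    refine ⟨34 * Real.pi * C, by positivity, fun ρ hρ0 hρ1 => ?_⟩
    have ρn : 0 ≤ ρ := h0.le.trans hρ0
    have hρ : ρ ∈ Set.Icc ρ0 1 := ⟨hρ0, hρ1.le⟩
    have e1 : (2 * Real.pi * L : ℂ) = ∫ u in (0:ℝ)..(2 * Real.pi), (pk ρ u : ℂ) * L := by
      rw [intervalIntegral.integral_mul_const, intervalIntegral.integral_ofReal, pk_int ρn hρ1]
      push_cast; ring
    have ck : Continuous fun u => (pk ρ u : ℂ) := Complex.continuous_ofReal.comp (pk_cont ρn hρ1)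
    have j1 : IntervalIntegrable (fun u : ℝ => (pk ρ u : ℂ) * Φ ρ (Complex.exp (u * Complex.I))) MeasureTheory.volume 0 (2 * Real.pi) :=
      (ck.mul (cu ρ hρ)).intervalIntegrable _ _
    have j2 : IntervalIntegrable (fun u : ℝ => (pk ρ u : ℂ) * L) MeasureTheory.volume 0 (2 * Real.pi) :=
      (ck.mul continuous_const).intervalIntegrable _ _
    rw [e1, ← intervalIntegral.integral_sub j1 j2]
    have b : ∀ u ∈ Set.Icc 0 (2 * Real.pi), ‖(pk ρ u : ℂ) * Φ ρ (Complex.exp (u * Complex.I)) - (pk ρ u : ℂ) * L‖ ≤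
        pk ρ u * (ε + C * (1 - ρ)) + C * (4 * (1 - ρ ^ 4)) := by
      intro u hu
      rw [← mul_sub, norm_mul, Complex.norm_real, Real.norm_eq_abs, abs_of_nonneg (pk_nonneg ρn hρ1 u)]
      have h3 := hC (ρ, u) ⟨hρ, hu⟩
      simp only at h3
      have h4 := pk_bound ρn hρ1 u
      have h5 := mul_le_mul_of_nonneg_left h3 (pk_nonneg ρn hρ1 u)
      have h6 := mul_le_mul_of_nonneg_left h4 C0
      refine h5.trans ?_
      linarith
    refine (intervalIntegral.norm_integral_le_of_norm_le (by positivity)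
      (Eventually.of_forall fun u hu => b u ⟨hu.1.le, hu.2⟩) ?_).trans ?_
    · exact (((pk_cont ρn hρ1).mul continuous_const).add continuous_const).intervalIntegrable _ _
    · have j3 : IntervalIntegrable (fun u : ℝ => pk ρ u * (ε + C * (1 - ρ))) MeasureTheory.volume 0 (2 * Real.pi) :=
        ((pk_cont ρn hρ1).mul continuous_const).intervalIntegrable _ _
      rw [intervalIntegral.integral_add j3
        (continuous_const.intervalIntegrable _ _), intervalIntegral.integral_mul_const, pk_int ρn hρ1,
        intervalIntegral.integral_const, smul_eq_mul]
      have h7 : 1 - ρ ^ 4 ≤ 4 * (1 - ρ) := by nlinarith [sq_nonneg (ρ - 1), sq_nonneg (ρ ^ 2 - 1), sq_nonneg (ρ+1)]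
      have h8 : C * (1 - ρ ^ 4) ≤ C * (4 * (1 - ρ)) := mul_le_mul_of_nonneg_left h7 C0
      have h9 := mul_le_mul_of_nonneg_left h8 hpi.le
      linarith
  rw [Metric.tendsto_nhdsWithin_nhds]
  intro ε hε
  obtain ⟨C, C0, hC⟩ := est (ε / (4 * Real.pi)) (by positivity)
  refine ⟨min (1 - ρ0) (ε / (2 * (C + 1))), lt_min (by linarith) (by positivity), fun {ρ} hρ hd => ?_⟩
  have hρ1 : ρ < 1 := hρ
  rw [Real.dist_eq, abs_of_nonpos (by linarith)] at hd
  have d1 := hd.trans_le (min_le_left _ _)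
  have d2 := hd.trans_le (min_le_right _ _)
  rw [dist_eq_norm]
  refine (hC ρ (by linarith) hρ1).trans_lt ?_
  have e1 : 2 * Real.pi * (ε / (4 * Real.pi)) = ε / 2 := by field_simp; norm_num
  rw [lt_div_iff₀ (by positivity)] at d2
  rw [e1]
  nlinarith


noncomputable def Eh (p q x : ℂ) : ℂ := qpoch (p * x) p * EE p q (q * x)

noncomputable def Gh (p q x : ℂ) : ℂ := EE p q (p * q * x⁻¹) / Eh p q x

lemma EE_Eh (hp : ‖p‖ < 1) (hq : ‖q‖ < 1) (x : ℂ) : EE p q x = (1 - x) * Eh p q x := by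
  rw [EE_q hp hq, qpoch_succ hp]; unfold Eh; ring

lemma egamma_Gh (hp : ‖p‖ < 1) (hq : ‖q‖ < 1) (x : ℂ) : egamma x p q = Gh p q x / (1 - x) := by
  rw [egamma_eq hp hq, EE_Eh hp hq x]; unfold Gh; rw [div_div, mul_comm (1 - x)]

lemma norm_mul_lt {x y : ℂ} (hx : ‖x‖ < 1) (hy : ‖y‖ ≤ 1) : ‖x * y‖ < 1 := by
  rw [norm_mul]; exact mul_lt_one_of_nonneg_of_lt_one_left (norm_nonneg _) hx hy

lemma Eh_ne (hp : ‖p‖ < 1) (hq : ‖q‖ < 1) {x : ℂ} (hx : ‖x‖ ≤ 1) : Eh p q x ≠ 0 :=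
  mul_ne_zero (qpoch_ne_zero hp (norm_mul_lt hp hx)) (EE_ne_zero hp hq (norm_mul_lt hq hx))

lemma Gh_contAt {X : Type*} [TopologicalSpace X] (hp : ‖p‖ < 1) (hq : ‖q‖ < 1) {f : X → ℂ} {x : X}
    (hf : ContinuousAt f x) (h : f x ≠ 0) (h1 : ‖f x‖ ≤ 1) :
    ContinuousAt (fun z => Gh p q (f z)) x := by
  have c1 : Continuous (EE p q) := (EE_differentiable hp hq).continuous
  have c2 : Continuous (fun z => qpoch z p) := (qpoch_differentiable hp).continuous
  unfold Gh
  refine ContinuousAt.div ?_ ?_ (Eh_ne hp hq h1)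
  · exact c1.continuousAt.comp (continuousAt_const.mul (hf.inv₀ h))
  · unfold Eh
    exact (c2.continuousAt.comp (continuousAt_const.mul hf)).mul (c1.continuousAt.comp (continuousAt_const.mul hf))

lemma Gh_sq_one (hp : ‖p‖ < 1) (hq : ‖q‖ < 1) {x : ℂ} (hx : x⁻¹ = x) (hx1 : ‖x‖ ≤ 1) :
    Gh p q x * (qpoch (p * x) p * qpoch (q * x) q) = 1 := by
  unfold Gh Eh
  rw [hx, EE_p hp hq (q * x), ← mul_assoc p q x]
  have n1 := qpoch_ne_zero hp (norm_mul_lt hp hx1)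
  have n2 := qpoch_ne_zero hq (norm_mul_lt hq hx1)
  have n3 := EE_ne_zero hp hq (norm_mul_lt (norm_pq_lt hp hq) hx1)
  field_simp

lemma theta_m1 (hp : ‖p‖ < 1) : theta p (-1) = 2 * qpoch (p * -1) p ^ 2 := by
  unfold theta
  rw [qpoch_succ hp (-1), show ((-1:ℂ))⁻¹ = -1 by norm_num]; ring

lemma II_swap (a b c d e f : ℂ) : II p q a b c d e f = II p q a c b d e f := by
  unfold II WW; congr 1; ext u; ring

lemma RR_swap (a b c d e f : ℂ) : RR p q a b c d e f = RR p q a c b d e f := by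
  unfold RR; rw [mul_comm c b]; ring

/-- special family -/
lemma F_special (hp : ‖p‖ < 1) (hp0 : p ≠ 0) (hq : ‖q‖ < 1) (hq0 : q ≠ 0) {a b c d e f : ℂ}
    (h : Adm p q a b c d e f) (hs : ‖a * b‖ < ‖q‖) {ρ : ℝ} (h1 : ρ < 1) (h2 : ‖q‖ ≤ ρ) (h3 : ‖c‖ ≤ ρ) :
    II p q a b c d e f / RR p q a b c d e f =
     II p q (a * b * c / ρ ^ 2) (-Complex.I * ρ) (Complex.I * ρ) d e f / RR p q (a * b * c / ρ ^ 2) (-Complex.I * ρ) (Complex.I * ρ) d e f ∧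
    Adm p q (a * b * c / ρ ^ 2) (-Complex.I * ρ) (Complex.I * ρ) d e f := by
  have ρ0 : 0 < ρ := (norm_pos_iff.2 hq0).trans_le h2
  have ρc : (ρ : ℂ) ≠ 0 := by exact_mod_cast ρ0.ne'
  obtain ⟨ha1, hb1, hc1, hd1, he1, hf1, H⟩ := h
  have n1 : ‖Complex.I * (ρ:ℂ)‖ = ρ := by simp [abs_of_pos ρ0]
  have n1' : ‖-Complex.I * (ρ:ℂ)‖ = ρ := by simp [abs_of_pos ρ0]
  have n2 : ‖a * b / (Complex.I * ρ)‖ < 1 := by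
    rw [norm_div, n1, div_lt_one ρ0]; linarith
  have n3 : ‖a * b * c‖ < ‖q‖ * ρ := by
    rw [norm_mul]
    calc ‖a * b‖ * ‖c‖ ≤ ‖a * b‖ * ρ := by gcongr
      _ < ‖q‖ * ρ := by gcongr
  have n4 : ‖a * b * c / (ρ:ℂ) ^ 2‖ < 1 := by
    rw [norm_div, norm_pow, Complex.norm_real, Real.norm_eq_abs, abs_of_pos ρ0, div_lt_one (by positivity)]
    nlinarith
  have m1 := F_move hp hp0 hq hq0 (a' := a * b / (Complex.I * ρ)) (b' := Complex.I * ρ)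
    ⟨ha1, hb1, hc1, hd1, he1, hf1, H⟩ n2 (by rw [n1]; exact h1) (by field_simp) hs
  have I2 := Complex.I_sq
  have I0 := Complex.I_ne_zero
  have key : a * b / (Complex.I * ρ) * c = (a * b * c / (ρ:ℂ) ^ 2) * (-Complex.I * ρ) := by
    rw [div_eq_mul_inv, mul_inv, Complex.inv_I]; field_simp
  have A2 : Adm p q (a * b / (Complex.I * ρ)) c (Complex.I * ρ) d e f :=
    ⟨n2, hc1, by rw [n1]; exact h1, hd1, he1, hf1, by rw [← H]; field_simp⟩
  have m2 := F_move hp hp0 hq hq0 A2 n4 (by rw [n1']; exact h1) key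
    (by
      have : a * b / (Complex.I * ρ) * c = (a * b * c) / (Complex.I * ρ) := by ring
      rw [this, norm_div, n1, div_lt_iff₀ ρ0]; exact n3)
  refine ⟨?_, n4, by rw [n1']; exact h1, by rw [n1]; exact h1, hd1, he1, hf1, ?_⟩
  · rw [m1, II_swap, RR_swap, m2]
  · rw [← H]; field_simp; linear_combination (-(a * b * c * d * e * f)) * I2

noncomputable def Phi (p q A d e f : ℂ) (ρ : ℝ) (z : ℂ) : ℂ :=
  gg p q (A / ρ ^ 2) z * gg p q d z * gg p q e z * gg p q f z * DD p q z *
   (Gh p q (-Complex.I * ρ * z) * Gh p q (-Complex.I * ρ * z⁻¹) * Gh p q (Complex.I * ρ * z) * Gh p q (Complex.I * ρ * z⁻¹))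

noncomputable def PP (p q A d e f : ℂ) : ℂ := gg p q A Complex.I * gg p q d Complex.I * gg p q e Complex.I * gg p q f Complex.I

lemma Phi_val (hp : ‖p‖ < 1) (hq : ‖q‖ < 1) (A d e f z : ℂ) (hz : z ^ 2 = -1) :
    Phi p q A d e f 1 z = 4 * Gh p q 1 ^ 2 * PP p q A d e f := by
  have k1 := Gh_sq_one hp hq (x := -1) (by norm_num) (by simp)
  have hDD : DD p q z = 4 * (qpoch (p * -1) p * qpoch (q * -1) q) ^ 2 := by
    unfold DD
    rw [hz, show ((-1:ℂ))⁻¹ = -1 by norm_num, theta_m1 hp, theta_m1 hq]; ring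
  have hI : Complex.I * Complex.I⁻¹ = 1 := mul_inv_cancel₀ Complex.I_ne_zero
  have hII := Complex.I_mul_I
  have hzz : z = Complex.I ∨ z = Complex.I⁻¹ := by
    have : (z - Complex.I) * (z - Complex.I⁻¹) = 0 := by rw [Complex.inv_I]; linear_combination hz - hII
    rcases mul_eq_zero.1 this with h | h
    · left; linear_combination h
    · right; linear_combination h
  have step : Phi p q A d e f 1 z = PP p q A d e f * DD p q z * (Gh p q 1 ^ 2 * Gh p q (-1) ^ 2) := by
    unfold Phi PP
    rcases hzz with rfl | rfl
    · simp only [Complex.ofReal_one, one_pow, div_one, mul_one, neg_mul, hII, hI, neg_neg]; ring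
    · simp only [gg_inv, inv_inv, Complex.ofReal_one, one_pow, div_one, mul_one, neg_mul, hII, hI, neg_neg]; ring
  rw [step, hDD]
  linear_combination (4 * Gh p q 1 ^ 2 * PP p q A d e f) * (Gh p q (-1) * (qpoch (p * -1) p * qpoch (q * -1) q) + 1) * k1

lemma Phi_WW (hp : ‖p‖ < 1) (hq : ‖q‖ < 1) (A d e f : ℂ) {ρ : ℝ} (h0 : 0 ≤ ρ) (h1 : ρ < 1) (u : ℝ) :
    (1 - (ρ:ℂ) ^ 4) * WW p q (A / ρ ^ 2) (-Complex.I * ρ) (Complex.I * ρ) d e f (Complex.exp (u * Complex.I)) =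
      (pk ρ u : ℂ) * Phi p q A d e f ρ (Complex.exp (u * Complex.I)) := by
  rw [pk_eq h0 h1]
  generalize Complex.exp (u * Complex.I) = z
  have e1 : 1 + (ρ:ℂ) ^ 2 * z ^ 2 = (1 - -Complex.I * ρ * z) * (1 - Complex.I * ρ * z) := by
    linear_combination ((ρ:ℂ) ^ 2 * z ^ 2) * Complex.I_sq
  have e2 : 1 + (ρ:ℂ) ^ 2 * z⁻¹ ^ 2 = (1 - -Complex.I * ρ * z⁻¹) * (1 - Complex.I * ρ * z⁻¹) := by
    linear_combination ((ρ:ℂ) ^ 2 * z⁻¹ ^ 2) * Complex.I_sq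
  rw [e1, e2]
  unfold WW Phi
  have g1 : gg p q (-Complex.I * ρ) z = Gh p q (-Complex.I * ρ * z) / (1 - -Complex.I * ρ * z) * (Gh p q (-Complex.I * ρ * z⁻¹) / (1 - -Complex.I * ρ * z⁻¹)) := by
    unfold gg; rw [egamma_Gh hp hq, egamma_Gh hp hq]
  have g2 : gg p q (Complex.I * ρ) z = Gh p q (Complex.I * ρ * z) / (1 - Complex.I * ρ * z) * (Gh p q (Complex.I * ρ * z⁻¹) / (1 - Complex.I * ρ * z⁻¹)) := by
    unfold gg; rw [egamma_Gh hp hq, egamma_Gh hp hq]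
  rw [g1, g2]
  simp only [div_eq_mul_inv, mul_inv]
  ring

lemma Phi_cont (hp : ‖p‖ < 1) (hq : ‖q‖ < 1) {A d e f : ℂ} (hA : A ≠ 0) (hd : d ≠ 0) (he : e ≠ 0) (hf : f ≠ 0)
    (hd1 : ‖d‖ < 1) (he1 : ‖e‖ < 1) (hf1 : ‖f‖ < 1) {ρ : ℝ} (h0 : 0 < ρ) (h1 : ρ ≤ 1) (hA1 : ‖A / (ρ:ℂ) ^ 2‖ < 1) (u : ℝ) :
    ContinuousAt (fun y : ℝ × ℝ => Phi p q A d e f y.1 (Complex.exp (y.2 * Complex.I))) (ρ, u) := by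
  have ρc : (ρ : ℂ) ≠ 0 := by exact_mod_cast h0.ne'
  have z0 : Complex.exp (u * Complex.I) ≠ 0 := Complex.exp_ne_zero _
  have cz : ContinuousAt (fun y : ℝ × ℝ => Complex.exp (y.2 * Complex.I)) (ρ, u) := by fun_prop
  have czi : ContinuousAt (fun y : ℝ × ℝ => (Complex.exp (y.2 * Complex.I))⁻¹) (ρ, u) := cz.inv₀ z0
  have nz := circle_norm u
  have nzi : ‖(Complex.exp (u * Complex.I))⁻¹‖ = 1 := by rw [norm_inv, nz, inv_one]
  have cρ : ContinuousAt (fun y : ℝ × ℝ => (y.1 : ℂ)) (ρ, u) := by fun_prop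
  have G : ∀ {x : ℝ × ℝ → ℂ}, ContinuousAt x (ρ, u) → x (ρ, u) ≠ 0 → ‖x (ρ, u)‖ < 1 →
      ContinuousAt (fun y : ℝ × ℝ => gg p q (x y) (Complex.exp (y.2 * Complex.I))) (ρ, u) := by
    intro x hx hx0 hx1
    unfold gg
    refine (egamma_contAt hp hq (hx.mul cz) (mul_ne_zero hx0 z0) ?_).mul (egamma_contAt hp hq (hx.mul czi) (mul_ne_zero hx0 (inv_ne_zero z0)) ?_)
    · exact norm_mul_lt hx1 nz.le
    · exact norm_mul_lt hx1 nzi.le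
  have nn : ∀ s : ℂ, ‖s‖ = 1 → ∀ w : ℂ, ‖w‖ = 1 → ‖s * ρ * w‖ ≤ 1 ∧ s * ρ * w ≠ 0 := by
    intro s hs w hw
    have : ‖s * ρ * w‖ = ρ := by simp [hs, hw, abs_of_pos h0]
    exact ⟨by rw [this]; exact h1, by rw [← norm_pos_iff, this]; exact h0⟩
  have H : ∀ s : ℂ, ‖s‖ = 1 → ∀ {w : ℝ × ℝ → ℂ}, ContinuousAt w (ρ, u) → ‖w (ρ, u)‖ = 1 →
      ContinuousAt (fun y : ℝ × ℝ => Gh p q (s * y.1 * w y)) (ρ, u) := fun s hs w hw hw1 =>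
    Gh_contAt hp hq ((continuousAt_const.mul cρ).mul hw) (nn s hs _ hw1).2 (nn s hs _ hw1).1
  have D : ContinuousAt (fun y : ℝ × ℝ => DD p q (Complex.exp (y.2 * Complex.I))) (ρ, u) :=
    ContinuousAt.comp (g := DD p q) (DD_diff hp hq z0).continuousAt cz
  have i1 : ‖-Complex.I‖ = 1 := by simp
  have i2 : ‖Complex.I‖ = 1 := by simp
  unfold Phi
  exact (((((G (continuousAt_const.div (cρ.pow 2) (pow_ne_zero 2 ρc)) (div_ne_zero hA (pow_ne_zero 2 ρc)) hA1).mul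
    (G continuousAt_const hd hd1)).mul (G continuousAt_const he he1)).mul (G continuousAt_const hf hf1)).mul D).mul
    ((((H _ i1 cz nz).mul (H _ i1 czi nzi)).mul (H _ i2 cz nz)).mul (H _ i2 czi nzi))

lemma RR_lim (hp : ‖p‖ < 1) (hp0 : p ≠ 0) (hq : ‖q‖ < 1) (hq0 : q ≠ 0) {A d e f : ℂ}
    (hA1 : ‖A‖ < 1) (hd1 : ‖d‖ < 1) (he1 : ‖e‖ < 1) (hf1 : ‖f‖ < 1) (H : A * d * e * f = p * q) :
    Tendsto (fun ρ : ℝ => (1 - (ρ:ℂ) ^ 2) * RR p q (A / ρ ^ 2) (-Complex.I * ρ) (Complex.I * ρ) d e f) (𝓝[<] 1)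
      (𝓝 (Gh p q 1 * PP p q A d e f)) := by
  have hne := mul_ne_zero hp0 hq0
  have hA : A ≠ 0 := by rintro rfl; apply hne; rw [← H]; ring
  have hd : d ≠ 0 := by rintro rfl; apply hne; rw [← H]; ring
  have he : e ≠ 0 := by rintro rfl; apply hne; rw [← H]; ring
  have hf : f ≠ 0 := by rintro rfl; apply hne; rw [← H]; ring
  have cρ : ContinuousAt (fun y : ℝ => (y : ℂ)) 1 := by fun_prop
  set T : ℝ → ℂ := fun ρ => Gh p q ((ρ:ℂ) ^ 2) *
    ((egamma (A / ρ ^ 2 * (-Complex.I * ρ)) p q * egamma (A / ρ ^ 2 * (Complex.I * ρ)) p q *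
      (egamma (A / ρ ^ 2 * d) p q * egamma (A / ρ ^ 2 * e) p q * egamma (A / ρ ^ 2 * f) p q)) *
     (egamma (-Complex.I * ρ * d) p q * egamma (-Complex.I * ρ * e) p q * egamma (-Complex.I * ρ * f) p q) *
     (egamma (Complex.I * ρ * d) p q * egamma (Complex.I * ρ * e) p q * egamma (Complex.I * ρ * f) p q) *
     (egamma (d * e) p q * egamma (d * f) p q * egamma (e * f) p q)) with hT
  have e1 : ∀ᶠ ρ : ℝ in 𝓝[<] (1:ℝ), T ρ = (1 - (ρ:ℂ) ^ 2) * RR p q (A / ρ ^ 2) (-Complex.I * ρ) (Complex.I * ρ) d e f := by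
    have : Set.Ioo (0:ℝ) 1 ∈ 𝓝[<] (1:ℝ) := Ioo_mem_nhdsLT (by norm_num)
    filter_upwards [this] with ρ hρ
    have n : 1 - (ρ:ℂ) ^ 2 ≠ 0 := by
      have : (1 - ρ ^ 2 : ℝ) ≠ 0 := by nlinarith [hρ.1, hρ.2]
      exact_mod_cast this
    have e3 : -Complex.I * ρ * (Complex.I * ρ) = (ρ:ℂ) ^ 2 := by linear_combination (-(ρ:ℂ) ^ 2) * Complex.I_sq
    simp only [hT]
    unfold RR
    have e4 : Gh p q ((ρ:ℂ) ^ 2) = (1 - (ρ:ℂ) ^ 2) * egamma ((ρ:ℂ) ^ 2) p q := by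
      rw [egamma_Gh hp hq ((ρ:ℂ) ^ 2), mul_div_cancel₀ _ n]
    rw [e3, e4]
    ring
  refine Tendsto.congr' e1 ?_
  have cA : ContinuousAt (fun y : ℝ => A / (y:ℂ) ^ 2) 1 := continuousAt_const.div (cρ.pow 2) (by simp)
  have T1 : T 1 = Gh p q 1 * PP p q A d e f := by
    have r := fun x y z w (hx : ‖x‖ < 1) (hy : ‖y‖ < 1) (hz : ‖z‖ < 1) (hw : ‖w‖ < 1) (h : x * y * z * w = p * q) =>
      egamma_refl hp hq (z := x * y) (w := z * w) (lt_one_mul hx hy) (lt_one_mul hz hw)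
        (by intro h0; apply hne; rw [← h, h0]; ring) (by intro h0; apply hne; rw [← h, mul_assoc, h0]; ring) (by rw [← h]; ring)
    have r1 := r A d e f hA1 hd1 he1 hf1 H
    have r2 := r A e d f hA1 he1 hd1 hf1 (by rw [← H]; ring)
    have r3 := r A f d e hA1 hf1 hd1 he1 (by rw [← H]; ring)
    simp only [hT]
    unfold PP gg
    simp only [Complex.ofReal_one, one_pow, div_one, mul_one, Complex.inv_I]
    rw [mul_comm (-Complex.I) d, mul_comm (-Complex.I) e, mul_comm (-Complex.I) f, mul_comm Complex.I d,
      mul_comm Complex.I e, mul_comm Complex.I f]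
    generalize egamma (A * d) p q = x1 at *
    generalize egamma (A * e) p q = x2 at *
    generalize egamma (A * f) p q = x3 at *
    generalize egamma (e * f) p q = y1 at *
    generalize egamma (d * f) p q = y2 at *
    generalize egamma (d * e) p q = y3 at *
    have : x1 * x2 * x3 * (y3 * y2 * y1) = 1 := by
      calc _ = (x1 * y1) * (x2 * y2) * (x3 * y3) := by ring
        _ = 1 := by rw [r1, r2, r3]; ring
    linear_combination (Gh p q 1 * (egamma (A * Complex.I) p q * egamma (A * -Complex.I) p q) * (egamma (d * Complex.I) p q * egamma (d * -Complex.I) p q) * (egamma (e * Complex.I) p q * egamma (e * -Complex.I) p q) * (egamma (f * Complex.I) p q * egamma (f * -Complex.I) p q)) * this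
  rw [← T1]
  have i1 : ‖-Complex.I * ((1:ℝ):ℂ)‖ ≤ 1 := by simp
  have i2 : ‖Complex.I * ((1:ℝ):ℂ)‖ ≤ 1 := by simp
  have i10 : -Complex.I * ((1:ℝ):ℂ) ≠ 0 := by simp
  have i20 : Complex.I * ((1:ℝ):ℂ) ≠ 0 := by simp
  have A1 : ‖A / ((1:ℝ):ℂ) ^ 2‖ < 1 := by simpa using hA1
  have A0 : A / ((1:ℝ):ℂ) ^ 2 ≠ 0 := by simpa using hA
  have c1 : ContinuousAt (fun y : ℝ => -Complex.I * (y:ℂ)) 1 := by fun_prop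
  have c2 : ContinuousAt (fun y : ℝ => Complex.I * (y:ℂ)) 1 := by fun_prop
  have nml : ∀ {x y : ℂ}, ‖x‖ ≤ 1 → ‖y‖ < 1 → ‖x * y‖ < 1 := fun hx hy => by rw [mul_comm]; exact norm_mul_lt hy hx
  have K : ∀ {x y : ℝ → ℂ}, ContinuousAt x 1 → ContinuousAt y 1 → x 1 ≠ 0 → y 1 ≠ 0 → ‖x 1 * y 1‖ < 1 →
      ContinuousAt (fun ρ => egamma (x ρ * y ρ) p q) 1 := fun hx hy hx0 hy0 hl =>
    egamma_contAt hp hq (hx.mul hy) (mul_ne_zero hx0 hy0) hl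
  have cc : ∀ x : ℂ, ContinuousAt (fun _ : ℝ => x) 1 := fun x => continuousAt_const
  have CT : ContinuousAt T 1 := by
    refine (Gh_contAt hp hq (cρ.pow 2) (by simp) (by simp)).mul ((((ContinuousAt.mul ?_ ?_).mul ?_).mul ?_).mul ?_)
    · exact (K cA c1 A0 i10 (norm_mul_lt A1 i1)).mul (K cA c2 A0 i20 (norm_mul_lt A1 i2))
    · exact ((K cA (cc d) A0 hd (lt_one_mul A1 hd1)).mul (K cA (cc e) A0 he (lt_one_mul A1 he1))).mul (K cA (cc f) A0 hf (lt_one_mul A1 hf1))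
    · exact ((K c1 (cc d) i10 hd (nml i1 hd1)).mul (K c1 (cc e) i10 he (nml i1 he1))).mul (K c1 (cc f) i10 hf (nml i1 hf1))
    · exact ((K c2 (cc d) i20 hd (nml i2 hd1)).mul (K c2 (cc e) i20 he (nml i2 he1))).mul (K c2 (cc f) i20 hf (nml i2 hf1))
    · exact continuousAt_const
  exact CT.tendsto.mono_left nhdsWithin_le_nhds

lemma F_value (hp : ‖p‖ < 1) (hp0 : p ≠ 0) (hq : ‖q‖ < 1) (hq0 : q ≠ 0) {a b c d e f : ℂ}
    (h : Adm p q a b c d e f) (hs : ‖a * b‖ < ‖q‖) :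
    II p q a b c d e f = 4 * Real.pi * Gh p q 1 * RR p q a b c d e f := by
  set F := II p q a b c d e f / RR p q a b c d e f with hF
  have RRn := RR_ne hp hp0 hq hq0 h
  obtain ⟨ha, hb, hc, hd, he, hf⟩ := Adm_ne hp0 hq0 h
  have h' := h
  obtain ⟨ha1, hb1, hc1, hd1, he1, hf1, H⟩ := h'
  set A := a * b * c with hA
  have A0 : A ≠ 0 := mul_ne_zero (mul_ne_zero ha hb) hc
  have A1 : ‖A‖ < 1 := lt_one_mul (lt_one_mul ha1 hb1) hc1
  have HA : A * d * e * f = p * q := H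
  set ρ0 := max ‖q‖ ‖c‖ with hρ0
  have ρ01 : ρ0 < 1 := max_lt hq hc1
  have ρ00 : 0 < ρ0 := (norm_pos_iff.2 hq0).trans_le (le_max_left _ _)
  have AA : ∀ ρ : ℝ, ρ0 ≤ ρ → ‖A / (ρ:ℂ) ^ 2‖ < 1 := by
    intro ρ hρ
    have k1 : ‖q‖ ≤ ρ := (le_max_left _ _).trans hρ
    have k2 : ‖c‖ ≤ ρ := (le_max_right _ _).trans hρ
    have k0 : 0 < ρ := ρ00.trans_le hρ
    rw [norm_div, norm_pow, Complex.norm_real, Real.norm_eq_abs, abs_of_pos k0, div_lt_one (by positivity), hA, norm_mul]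
    calc ‖a * b‖ * ‖c‖ ≤ ‖a * b‖ * ρ := by gcongr
      _ < ‖q‖ * ρ := by gcongr
      _ ≤ ρ * ρ := by gcongr
      _ = ρ ^ 2 := by ring
  have lim1 := poisson_limit (Φ := Phi p q A d e f) ρ00 ρ01
    (fun ρ hρ u => Phi_cont hp hq A0 hd he hf hd1 he1 hf1 (ρ00.trans_le hρ.1) hρ.2 (AA ρ hρ.1) u)
    (4 * Gh p q 1 ^ 2 * PP p q A d e f) (fun z hz => Phi_val hp hq A d e f z hz)
  have lim2 := RR_lim hp hp0 hq hq0 A1 hd1 he1 hf1 HA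
  have lim3 : Tendsto (fun ρ : ℝ => 1 + (ρ:ℂ) ^ 2) (𝓝[<] 1) (𝓝 (1 + ((1:ℝ):ℂ) ^ 2)) := by
    have : ContinuousAt (fun ρ : ℝ => 1 + (ρ:ℂ) ^ 2) 1 := by fun_prop
    exact this.tendsto.mono_left nhdsWithin_le_nhds
  have lim4 := (lim3.const_mul F).mul lim2
  have ev : ∀ᶠ ρ : ℝ in 𝓝[<] (1:ℝ), F * (1 + (ρ:ℂ) ^ 2) * ((1 - (ρ:ℂ) ^ 2) * RR p q (A / ρ ^ 2) (-Complex.I * ρ) (Complex.I * ρ) d e f) =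
      ∫ u in (0:ℝ)..(2 * Real.pi), (pk ρ u : ℂ) * Phi p q A d e f ρ (Complex.exp (u * Complex.I)) := by
    filter_upwards [Ioo_mem_nhdsLT ρ01] with ρ hρ
    obtain ⟨s1, s2⟩ := F_special hp hp0 hq hq0 h hs hρ.2 ((le_max_left _ _).trans hρ.1.le) ((le_max_right _ _).trans hρ.1.le)
    have n := RR_ne hp hp0 hq hq0 s2
    rw [← hF, ← hA, eq_div_iff n] at s1
    simp_rw [← Phi_WW hp hq A d e f (ρ00.trans hρ.1).le hρ.2]
    rw [intervalIntegral.integral_const_mul]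
    change _ = _ * II p q (A / ρ ^ 2) (-Complex.I * ρ) (Complex.I * ρ) d e f
    rw [← s1]; ring
  have eq := tendsto_nhds_unique (lim4.congr' ev) lim1
  have Gn : Gh p q 1 ≠ 0 := by
    intro h0
    have := Gh_sq_one hp hq (x := 1) (by norm_num) (by simp)
    rw [h0, zero_mul] at this; exact zero_ne_one this
  have Pn : PP p q A d e f ≠ 0 := by
    have g : ∀ x y z w : ℂ, ‖x‖ < 1 → ‖y‖ < 1 → ‖z‖ < 1 → ‖w‖ < 1 → x * y * z * w = p * q → gg p q x Complex.I ≠ 0 := by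
      intro x y z w hx hy hz hw hh
      have lt : ‖p * q‖ < ‖x‖ := by
        have h : x * (y * z * w) = p * q := by rw [← hh]; ring
        rw [← h, norm_mul]
        have h1 : ‖y * z * w‖ < 1 := lt_one_mul (lt_one_mul hy hz) hw
        have h2 : 0 < ‖x‖ := by
          rw [norm_pos_iff]; intro h0; rw [h0, zero_mul] at h
          exact mul_ne_zero hp0 hq0 h.symm
        nlinarith
      unfold gg
      exact mul_ne_zero (egamma_ne_zero hp hq (by simpa using hx) (by simpa using lt)) (egamma_ne_zero hp hq (by simpa using hx) (by simpa using lt))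
    unfold PP
    exact mul_ne_zero (mul_ne_zero (mul_ne_zero (g A d e f A1 hd1 he1 hf1 HA) (g d A e f hd1 A1 he1 hf1 (by rw [← HA]; ring)))
      (g e A d f he1 A1 hd1 hf1 (by rw [← HA]; ring))) (g f A d e hf1 A1 hd1 he1 (by rw [← HA]; ring))
  have : F = 4 * Real.pi * Gh p q 1 := by
    have n : Gh p q 1 * PP p q A d e f ≠ 0 := mul_ne_zero Gn Pn
    refine mul_right_cancel₀ (mul_ne_zero two_ne_zero n) ?_
    push_cast at eq
    linear_combination eq
  rw [← this, hF, div_mul_cancel₀ _ RRn]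


noncomputable def path (σ τ l : ℂ) : ℂ := Complex.exp ((1 - l) * σ + l * τ)

lemma path_lt (σ τ l : ℂ) : ‖path σ τ l‖ < 1 ↔ ((1 - l) * σ + l * τ).re < 0 := by
  unfold path; rw [Complex.norm_exp, Real.exp_lt_one_iff]

lemma path_diff (σ τ : ℂ) : Differentiable ℂ (path σ τ) := by
  unfold path; fun_prop

lemma path_ne (σ τ l : ℂ) : path σ τ l ≠ 0 := Complex.exp_ne_zero _

lemma path_open (σ τ : ℂ) : IsOpen {l : ℂ | ‖path σ τ l‖ < 1} :=
  isOpen_lt (path_diff σ τ).continuous.norm continuous_const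

lemma path_convex (σ τ : ℂ) : Convex ℝ {l : ℂ | ‖path σ τ l‖ < 1} := by
  intro x hx y hy a b ha hb hab
  have hx' := (path_lt σ τ x).1 hx
  have hy' := (path_lt σ τ y).1 hy
  refine (path_lt σ τ _).2 ?_
  have hab' : (a:ℂ) + (b:ℂ) = 1 := by exact_mod_cast hab
  have e : (1 - (a • x + b • y)) * σ + (a • x + b • y) * τ = (a:ℂ) * ((1 - x) * σ + x * τ) + (b:ℂ) * ((1 - y) * σ + y * τ) := by
    simp only [Complex.real_smul]
    linear_combination (-σ) * hab'
  rw [e, Complex.add_re, Complex.re_ofReal_mul, Complex.re_ofReal_mul]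
  rcases ha.lt_or_eq with h | h
  · nlinarith
  · have : b = 1 := by linarith
    rw [← h, this]; linarith

lemma beta_integral (hp : ‖p‖ < 1) (hp0 : p ≠ 0) (hq : ‖q‖ < 1) (hq0 : q ≠ 0) {a b c d e f : ℂ}
    (h : Adm p q a b c d e f) :
    II p q a b c d e f = 4 * Real.pi * Gh p q 1 * RR p q a b c d e f := by
  obtain ⟨ha, hb, hc, hd, he, hf⟩ := Adm_ne hp0 hq0 h
  obtain ⟨ha1, hb1, hc1, hd1, he1, hf1, H⟩ := h
  have lp : Real.log ‖p‖ < 0 := Real.log_neg (norm_pos_iff.2 hp0) hp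
  have lq : Real.log ‖q‖ < 0 := Real.log_neg (norm_pos_iff.2 hq0) hq
  set S := Complex.log a + Complex.log b + Complex.log c + Complex.log d + Complex.log e + Complex.log f with hS
  have eS : Complex.exp S = p * q := by
    rw [hS]; simp only [Complex.exp_add]
    rw [Complex.exp_log ha, Complex.exp_log hb, Complex.exp_log hc, Complex.exp_log hd, Complex.exp_log he, Complex.exp_log hf, H]
  have rS : S.re = Real.log ‖p‖ + Real.log ‖q‖ := by
    have : ‖Complex.exp S‖ = ‖p‖ * ‖q‖ := by rw [eS, norm_mul]
    rw [Complex.norm_exp] at this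
    rw [← Real.log_mul (norm_ne_zero_iff.2 hp0) (norm_ne_zero_iff.2 hq0), ← this, Real.log_exp]
  set σ : ℂ := ((Real.log ‖p‖ / 5 : ℝ) : ℂ) with hσ
  set μ : ℂ := (S - 4 * σ) / 2 with hμ
  have rσ : σ.re < 0 := by rw [hσ, Complex.ofReal_re]; linarith
  have r2μ : (μ + μ).re = Real.log ‖p‖ / 5 + Real.log ‖q‖ := by
    have : μ + μ = S - ((4 * (Real.log ‖p‖ / 5) : ℝ) : ℂ) := by rw [hμ, hσ]; push_cast; ring
    rw [this, Complex.sub_re, Complex.ofReal_re, rS]; ring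
  have rμ : μ.re < 0 := by rw [Complex.add_re] at r2μ; linarith
  set U : Set ℂ := (({l : ℂ | ‖path μ (Complex.log a) l‖ < 1} ∩ {l : ℂ | ‖path μ (Complex.log b) l‖ < 1}) ∩
     ({l : ℂ | ‖path σ (Complex.log c) l‖ < 1} ∩ {l : ℂ | ‖path σ (Complex.log d) l‖ < 1})) ∩
     ({l : ℂ | ‖path σ (Complex.log e) l‖ < 1} ∩ {l : ℂ | ‖path σ (Complex.log f) l‖ < 1}) with hU
  have Uo : IsOpen U := (((path_open _ _).inter (path_open _ _)).inter ((path_open _ _).inter (path_open _ _))).inter ((path_open _ _).inter (path_open _ _))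
  have Uc : Convex ℝ U := (((path_convex _ _).inter (path_convex _ _)).inter ((path_convex _ _).inter (path_convex _ _))).inter ((path_convex _ _).inter (path_convex _ _))
  have p0 : ∀ s t : ℂ, s.re < 0 → ‖path s t 0‖ < 1 := fun s t hs => (path_lt s t 0).2 (by simpa using hs)
  have p1 : ∀ s t : ℂ, t ≠ 0 → path s (Complex.log t) 1 = t := fun s t ht => by simp [path, Complex.exp_log ht]
  have U0 : (0:ℂ) ∈ U := ⟨⟨⟨p0 _ _ rμ, p0 _ _ rμ⟩, ⟨p0 _ _ rσ, p0 _ _ rσ⟩⟩, ⟨p0 _ _ rσ, p0 _ _ rσ⟩⟩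
  have q1 : ∀ s t : ℂ, t ≠ 0 → ‖t‖ < 1 → (1:ℂ) ∈ {l : ℂ | ‖path s (Complex.log t) l‖ < 1} := fun s t ht h1 => by
    change ‖path s (Complex.log t) 1‖ < 1
    rw [p1 s t ht]; exact h1
  have U1 : (1:ℂ) ∈ U := ⟨⟨⟨q1 _ _ ha ha1, q1 _ _ hb hb1⟩, ⟨q1 _ _ hc hc1, q1 _ _ hd hd1⟩⟩, ⟨q1 _ _ he he1, q1 _ _ hf hf1⟩⟩
  have adm : ∀ l ∈ U, Adm p q (path μ (Complex.log a) l) (path μ (Complex.log b) l) (path σ (Complex.log c) l)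
      (path σ (Complex.log d) l) (path σ (Complex.log e) l) (path σ (Complex.log f) l) := by
    rintro l ⟨⟨⟨k1, k2⟩, ⟨k3, k4⟩⟩, ⟨k5, k6⟩⟩
    refine ⟨k1, k2, k3, k4, k5, k6, ?_⟩
    unfold path
    simp only [← Complex.exp_add]
    rw [← eS]; congr 1
    rw [hμ, hS]; ring
  have t : ∀ s t : ℂ, ∀ l, ‖path s t l‖ < 1 → DifferentiableAt ℂ (path s t) l ∧ path s t l ≠ 0 ∧ ‖path s t l‖ < 1 :=
    fun s t l hl => ⟨path_diff s t l, path_ne s t l, hl⟩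
  have D1 := II_diff hp hq Uo (a := path μ (Complex.log a)) (b := path μ (Complex.log b)) (c := path σ (Complex.log c))
    (d := path σ (Complex.log d)) (e := path σ (Complex.log e)) (f := path σ (Complex.log f))
    (fun l hl => t _ _ l hl.1.1.1) (fun l hl => t _ _ l hl.1.1.2) (fun l hl => t _ _ l hl.1.2.1)
    (fun l hl => t _ _ l hl.1.2.2) (fun l hl => t _ _ l hl.2.1) (fun l hl => t _ _ l hl.2.2)
  have D2 : DifferentiableOn ℂ (fun l => 4 * Real.pi * Gh p q 1 * RR p q (path μ (Complex.log a) l) (path μ (Complex.log b) l) (path σ (Complex.log c) l)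
      (path σ (Complex.log d) l) (path σ (Complex.log e) l) (path σ (Complex.log f) l)) U := fun l hl =>
    ((RR_diff hp hq (t _ _ l hl.1.1.1) (t _ _ l hl.1.1.2) (t _ _ l hl.1.2.1) (t _ _ l hl.1.2.2) (t _ _ l hl.2.1)
      (t _ _ l hl.2.2)).const_mul _).differentiableWithinAt
  have small : ‖path μ (Complex.log a) 0 * path μ (Complex.log b) 0‖ < ‖q‖ := by
    unfold path
    rw [← Complex.exp_add, Complex.norm_exp]
    have : ((1 - 0) * μ + 0 * Complex.log a + ((1 - 0) * μ + 0 * Complex.log b)) = μ + μ := by ring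
    rw [this, r2μ, ← Real.lt_log_iff_exp_lt (norm_pos_iff.2 hq0)]
    linarith
  have evs : ∀ᶠ l in 𝓝 (0:ℂ), ‖path μ (Complex.log a) l * path μ (Complex.log b) l‖ < ‖q‖ := by
    have cc : Continuous fun l => ‖path μ (Complex.log a) l * path μ (Complex.log b) l‖ :=
      ((path_diff _ _).continuous.mul (path_diff _ _).continuous).norm
    exact cc.continuousAt.eventually_lt continuousAt_const small
  have ev : (fun l => II p q (path μ (Complex.log a) l) (path μ (Complex.log b) l) (path σ (Complex.log c) l)
      (path σ (Complex.log d) l) (path σ (Complex.log e) l) (path σ (Complex.log f) l)) =ᶠ[𝓝 0]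
      (fun l => 4 * Real.pi * Gh p q 1 * RR p q (path μ (Complex.log a) l) (path μ (Complex.log b) l) (path σ (Complex.log c) l)
      (path σ (Complex.log d) l) (path σ (Complex.log e) l) (path σ (Complex.log f) l)) := by
    filter_upwards [evs, Uo.mem_nhds U0] with l h1 h2
    exact F_value hp hp0 hq hq0 (adm l h2) h1
  have fin := (D1.analyticOnNhd Uo).eqOn_of_preconnected_of_eventuallyEq (D2.analyticOnNhd Uo) Uc.isPreconnected U0 ev U1
  simp only [p1 _ _ ha, p1 _ _ hb, p1 _ _ hc, p1 _ _ hd, p1 _ _ he, p1 _ _ hf] at fin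
  exact fin


theorem star_triangle_kernel (p q r : ℂ) (hp0 : 0 < ‖p‖) (hp1 : ‖p‖ < 1)
    (hq0 : 0 < ‖q‖) (hq1 : ‖q‖ < 1) (hr : r ^ 2 = p * q)
    (s t y w z : ℂ) (hs : s ≠ 0) (ht : t ≠ 0) (hy : y ≠ 0) (hw : w ≠ 0) (hz : z ≠ 0)
    (h1 : ‖s * w‖ < 1) (h2 : ‖s * w⁻¹‖ < 1) (h3 : ‖t * z‖ < 1) (h4 : ‖t * z⁻¹‖ < 1)
    (h5 : ‖r * (s * t)⁻¹ * y‖ < 1) (h6 : ‖r * (s * t)⁻¹ * y⁻¹‖ < 1) :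
    (kappa p q * ∫ u in (0:ℝ)..(2 * Real.pi),
        gamma4 p q s w (Complex.exp (u * Complex.I)) *
          gamma4 p q (r * (s * t)⁻¹) y (Complex.exp (u * Complex.I)) *
          gamma4 p q t (Complex.exp (u * Complex.I)) z /
          (egamma (Complex.exp (u * Complex.I) ^ 2) p q *
            egamma ((Complex.exp (u * Complex.I) ^ 2)⁻¹) p q) * Complex.I)
      = egamma (s ^ 2) p q * egamma (t ^ 2) p q / egamma (s ^ 2 * t ^ 2) p q *
          Dfun p q r t y w * gamma4 p q (s * t) w z * Dfun p q r s y z := by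
  have hp : p ≠ 0 := norm_pos_iff.1 hp0
  have hq : q ≠ 0 := norm_pos_iff.1 hq0
  have hr0 : r ≠ 0 := by
    rintro rfl
    exact mul_ne_zero hp hq (by rw [← hr]; ring)
  have H : (s * w) * (s * w⁻¹) * (t * z) * (t * z⁻¹) * (r * (s * t)⁻¹ * y) * (r * (s * t)⁻¹ * y⁻¹) = p * q := by
    rw [← hr]; field_simp
  have A : Adm p q (s * w) (s * w⁻¹) (t * z) (t * z⁻¹) (r * (s * t)⁻¹ * y) (r * (s * t)⁻¹ * y⁻¹) :=
    ⟨h1, h2, h3, h4, h5, h6, H⟩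
  have B := beta_integral hp1 hp hq1 hq A
  have G1 := Gh_sq_one hp1 hq1 (x := 1) (by norm_num) (by simp)
  rw [mul_one, mul_one] at G1
  have e : ∀ u : ℝ, gamma4 p q s w (Complex.exp (u * Complex.I)) *
          gamma4 p q (r * (s * t)⁻¹) y (Complex.exp (u * Complex.I)) *
          gamma4 p q t (Complex.exp (u * Complex.I)) z /
          (egamma (Complex.exp (u * Complex.I) ^ 2) p q *
            egamma ((Complex.exp (u * Complex.I) ^ 2)⁻¹) p q) * Complex.I =
      WW p q (s * w) (s * w⁻¹) (t * z) (t * z⁻¹) (r * (s * t)⁻¹ * y) (r * (s * t)⁻¹ * y⁻¹) (Complex.exp (u * Complex.I)) * Complex.I := by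
    intro u
    rw [div_eq_mul_inv, DD_eq hp1 hq1 (circle_norm u)]
    unfold WW gg gamma4
    generalize Complex.exp (u * Complex.I) = x
    rw [mul_right_comm t x z, mul_right_comm t x z⁻¹, mul_right_comm t x⁻¹ z, mul_right_comm t x⁻¹ z⁻¹]
    ring
  simp_rw [e]
  rw [intervalIntegral.integral_mul_const]
  change kappa p q * (II p q (s * w) (s * w⁻¹) (t * z) (t * z⁻¹) (r * (s * t)⁻¹ * y) (r * (s * t)⁻¹ * y⁻¹) * Complex.I) = _
  have K : kappa p q * (II p q (s * w) (s * w⁻¹) (t * z) (t * z⁻¹) (r * (s * t)⁻¹ * y) (r * (s * t)⁻¹ * y⁻¹) * Complex.I) =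
      RR p q (s * w) (s * w⁻¹) (t * z) (t * z⁻¹) (r * (s * t)⁻¹ * y) (r * (s * t)⁻¹ * y⁻¹) := by
    rw [B]
    unfold kappa
    have hpi : (Real.pi : ℂ) ≠ 0 := by exact_mod_cast Real.pi_ne_zero
    have hI := Complex.I_ne_zero
    generalize RR p q (s * w) (s * w⁻¹) (t * z) (t * z⁻¹) (r * (s * t)⁻¹ * y) (r * (s * t)⁻¹ * y⁻¹) = R
    field_simp
    linear_combination R * G1
  rw [K]
  have E1 : s * w * (s * w⁻¹) = s ^ 2 := by field_simp
  have E2 : t * z * (t * z⁻¹) = t ^ 2 := by field_simp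
  have E3 : egamma (r * (s * t)⁻¹ * y * (r * (s * t)⁻¹ * y⁻¹)) p q = (egamma (s ^ 2 * t ^ 2) p q)⁻¹ := by
    have n : ‖s ^ 2 * t ^ 2‖ < 1 := by rw [← E1, ← E2]; exact lt_one_mul (lt_one_mul h1 h2) (lt_one_mul h3 h4)
    have := egamma_refl hp1 hq1 (lt_one_mul h5 h6) n
      (by positivity) (by positivity) (by rw [← hr]; field_simp)
    exact eq_inv_of_mul_eq_one_left this
  have c1 : s * w * (r * (s * t)⁻¹ * y) = r * t⁻¹ * y * w := by field_simp
  have c2 : s * w * (r * (s * t)⁻¹ * y⁻¹) = r * t⁻¹ * y⁻¹ * w := by field_simp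
  have c3 : s * w⁻¹ * (r * (s * t)⁻¹ * y) = r * t⁻¹ * y * w⁻¹ := by field_simp
  have c4 : s * w⁻¹ * (r * (s * t)⁻¹ * y⁻¹) = r * t⁻¹ * y⁻¹ * w⁻¹ := by field_simp
  have d1 : t * z * (r * (s * t)⁻¹ * y) = r * s⁻¹ * y * z := by field_simp
  have d2 : t * z * (r * (s * t)⁻¹ * y⁻¹) = r * s⁻¹ * y⁻¹ * z := by field_simp
  have d3 : t * z⁻¹ * (r * (s * t)⁻¹ * y) = r * s⁻¹ * y * z⁻¹ := by field_simp
  have d4 : t * z⁻¹ * (r * (s * t)⁻¹ * y⁻¹) = r * s⁻¹ * y⁻¹ * z⁻¹ := by field_simp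
  have f1 : ∀ w z : ℂ, s * w * (t * z) = s * t * w * z := fun w z => by ring
  unfold RR Dfun gamma4
  rw [E3, c1, c2, c3, c4, d1, d2, d3, d4, E1, E2, f1, f1, f1, f1, div_eq_mul_inv]
  ring
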